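/- arXiv:2501.03470 — 2 statements merged into one kernel-verified Lean document; each statement's English description precedes it below -/
import Mathlib

section
/- Suppose ν satisfies the Carleman condition and the matrix quadratic module Q^p(G,ν) is Archimedean (there is C > 0 with C − ‖x‖² ∈ Q¹(G,ν)). If F(x) ∈ S[x]^p is positive definite on X = {x : G(x,y) ⪰ 0 ∀ y ∈ Y}, then F ∈ Q^p(G,ν), i.e., F(x) = Σ₀(x) + ∫_Y ⟨Σ(x,y), G(x,y)⟩_p dν(y) for some SOS matrices Σ₀ ∈ S[x]^p and Σ ∈ S[x,y]^{pq}. -/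
open MeasureTheory MvPolynomial Matrix Finset

noncomputable section

/-- A polynomial matrix is an SOS matrix if it factors as `Tᵀ * T`. -/
def IsSOSMatrix {σ : Type*} {ι : Type*} [Fintype ι]
    (M : Matrix ι ι (MvPolynomial σ ℝ)) : Prop :=
  ∃ (l : ℕ) (T : Matrix (Fin l) ι (MvPolynomial σ ℝ)), M = Tᵀ * T

/-- A polynomial is a sum of squares. -/
def IsSOSPoly {σ : Type*} (f : MvPolynomial σ ℝ) : Prop :=
  ∃ (l : ℕ) (g : Fin l → MvPolynomial σ ℝ), f = ∑ i, (g i) ^ 2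

/-- The block-trace bilinear map `⟨A,B⟩_p = Tr_p (Aᵀ (I_p ⊗ B))`. -/
def lram {R : Type*} [CommSemiring R] {ιp ιq : Type*} [Fintype ιq]
    (A : Matrix (ιp × ιq) (ιp × ιq) R) (B : Matrix ιq ιq R) :
    Matrix ιp ιp R :=
  Matrix.of fun i j => ∑ a : ιq, ∑ c : ιq, A (j, c) (i, a) * B c a

/-- The `x`-part of an exponent in the variables `x ⊕ y`. -/
def xPart {n m : ℕ} (d : (Fin n ⊕ Fin m) →₀ ℕ) : Fin n →₀ ℕ :=
  Finsupp.comapDomain Sum.inl d Sum.inl_injective.injOn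

/-- Integrate out the `y`-variables of a polynomial in `(x, y)` against the measure `ν`:
`∫_Y Σ_β H_β(x) y^β dν := Σ_β H_β(x) ∫_Y y^β dν`. -/
def integY {n m : ℕ} (ν : Measure (Fin m → ℝ))
    (q : MvPolynomial (Fin n ⊕ Fin m) ℝ) : MvPolynomial (Fin n) ℝ :=
  ∑ d ∈ q.support, MvPolynomial.monomial (xPart d)
    (q.coeff d * ∫ y, ∏ j : Fin m, (y j) ^ (d (Sum.inr j)) ∂ν)

/-- All polynomial moments of `ν` are finite. -/
def momentsFinite {m : ℕ} (ν : Measure (Fin m → ℝ)) : Prop :=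
  ∀ h : MvPolynomial (Fin m) ℝ, Integrable (fun y => |MvPolynomial.eval y h|) ν

/-- `ν` has support exactly `Y`. -/
def hasSupport {m : ℕ} (ν : Measure (Fin m → ℝ)) (Y : Set (Fin m → ℝ)) : Prop :=
  ν Yᶜ = 0 ∧ ∀ U : Set (Fin m → ℝ), IsOpen U → (U ∩ Y).Nonempty → 0 < ν U

/-- The multivariate Carleman condition on `ν`. -/
def Carleman {m : ℕ} (ν : Measure (Fin m → ℝ)) : Prop :=
  ∀ j : Fin m, ¬ Summable (fun d : ℕ =>
    (∫ y, (y j) ^ (2 * (d + 1)) ∂ν) ^ (-(1 : ℝ) / (2 * (d + 1))))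

/-- Evaluate a polynomial matrix at a point. -/
def evalMat {σ : Type*} {ι : Type*} (x : σ → ℝ)
    (M : Matrix ι ι (MvPolynomial σ ℝ)) : Matrix ι ι ℝ :=
  M.map (MvPolynomial.eval x)

/-- The spectral (L²-operator) norm of a real matrix. -/
def specNorm {ι : Type*} [Fintype ι] [DecidableEq ι] (A : Matrix ι ι ℝ) : ℝ :=
  ‖(Matrix.toEuclideanLin A).toContinuousLinearMap‖

/-- Degree of a polynomial matrix. -/
def matDeg {ι σ : Type*} [Fintype ι] (M : Matrix ι ι (MvPolynomial σ ℝ)) : ℕ :=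
  Finset.univ.sup fun i => Finset.univ.sup fun j => (M i j).totalDegree

/-- Degree in `x` of a polynomial in `(x,y)`. -/
def degX {n m : ℕ} (q : MvPolynomial (Fin n ⊕ Fin m) ℝ) : ℕ :=
  q.support.sup fun d => ∑ i : Fin n, d (Sum.inl i)

/-- Degree in `y` of a polynomial in `(x,y)`. -/
def degY {n m : ℕ} (q : MvPolynomial (Fin n ⊕ Fin m) ℝ) : ℕ :=
  q.support.sup fun d => ∑ j : Fin m, d (Sum.inr j)

def matDegX {ι : Type*} {n m : ℕ} [Fintype ι]
    (M : Matrix ι ι (MvPolynomial (Fin n ⊕ Fin m) ℝ)) : ℕ :=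
  Finset.univ.sup fun i => Finset.univ.sup fun j => degX (M i j)

def matDegY {ι : Type*} {n m : ℕ} [Fintype ι]
    (M : Matrix ι ι (MvPolynomial (Fin n ⊕ Fin m) ℝ)) : ℕ :=
  Finset.univ.sup fun i => Finset.univ.sup fun j => degY (M i j)

/-- Homogeneity in `x` of a polynomial in `(x,y)`. -/
def IsHomogeneousX {n m : ℕ} (q : MvPolynomial (Fin n ⊕ Fin m) ℝ) (k : ℕ) : Prop :=
  ∀ d ∈ q.support, ∑ i : Fin n, d (Sum.inl i) = k

/-- Positive semidefiniteness of the full (infinite) moment matrix `M(S)`: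
every finite principal block submatrix is PSD. -/
def MomentPSD {n p : ℕ} (S : (Fin n →₀ ℕ) → Matrix (Fin p) (Fin p) ℝ) : Prop :=
  ∀ (N : ℕ) (idx : Fin N → (Fin n →₀ ℕ)),
    (Matrix.of fun a b : Fin N × Fin p => S (idx a.1 + idx b.1) a.2 b.2).PosSemidef

/-- Exponents of degree at most `d` in `n` variables. -/
def Expo (n d : ℕ) := {a : Fin n → Fin (d + 1) // ∑ i, (a i : ℕ) ≤ d}

instance (n d : ℕ) : Fintype (Expo n d) := by unfold Expo; infer_instance
instance (n d : ℕ) : DecidableEq (Expo n d) := by unfold Expo; infer_instance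

def expF {n d : ℕ} (a : Fin n → Fin (d + 1)) : Fin n →₀ ℕ :=
  Finsupp.equivFunOnFinite.symm (fun i => (a i : ℕ))

/-- Truncated moment matrix `M_d(S)`. -/
def momentMat {n p : ℕ} (S : (Fin n →₀ ℕ) → Matrix (Fin p) (Fin p) ℝ) (d : ℕ) :
    Matrix (Expo n d × Fin p) (Expo n d × Fin p) ℝ :=
  Matrix.of fun a b => S (expF a.1.1 + expF b.1.1) a.2 b.2

/-- Truncated localizing matrix `M^ν_{d,k}(G S)`. -/
def locMat {n m p q : ℕ} (ν : Measure (Fin m → ℝ))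
    (G : Matrix (Fin q) (Fin q) (MvPolynomial (Fin n ⊕ Fin m) ℝ))
    (S : (Fin n →₀ ℕ) → Matrix (Fin p) (Fin p) ℝ) (d k : ℕ) :
    Matrix ((Expo n d × Expo m k) × (Fin p × Fin q))
           ((Expo n d × Expo m k) × (Fin p × Fin q)) ℝ :=
  Matrix.of fun r c =>
    ∑ e ∈ (G r.2.2 c.2.2).support,
      (∫ y, ∏ j : Fin m, (y j) ^ (e (Sum.inr j) + (r.1.2.1 j : ℕ) + (c.1.2.1 j : ℕ)) ∂ν) *
      ((G r.2.2 c.2.2).coeff e *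
        S (expF r.1.1.1 + expF c.1.1.1 + xPart e) r.2.1 c.2.1)

/-- The Riesz functional `L_S(H) = Σ_α tr(H_α S_α)`. -/
def RieszL {n p : ℕ} (S : (Fin n →₀ ℕ) → Matrix (Fin p) (Fin p) ℝ)
    (H : Matrix (Fin p) (Fin p) (MvPolynomial (Fin n) ℝ)) : ℝ :=
  ∑ i, ∑ j, ∑ α ∈ (H i j).support, (H i j).coeff α * S α j i

end

/-!
Suppose a matrix `F` is not in the module. The Archimedean condition makes the identity an order
unit, so Eidelheit separation and Krein–Milman give a pure state `L` with `L F ≤ 0`. Multiplication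
of `L` by a bounded scalar is dominated by `L`, and purity then forces `L (f • H) = χ f * L H` for a
character `χ`, which on polynomials is evaluation at a point `a`. Hence `L F` depends only on
`F a`, and `F a` cannot be positive definite.

It remains to see that `G (a, y)` is positive semidefinite for `y` in the support of `ν`. The state
only yields `0 ≤ ∫ h² g dν` for all polynomials `h`, where `g y = vᵀ G (a, y) v`. Under the Carleman
condition, the Denjoy–Carleman theorem applied to Fourier transforms of polynomial multiples of `L²`
functions shows that every ideal of polynomials containing a nowhere vanishing one is dense in
`L²(ν)`; testing the inequality against the indicator of `{g < 0}` then gives `0 ≤ g` on the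
support.
-/

section DenjoyCarleman

variable {E : Type*} [NormedAddCommGroup E] [NormedSpace ℝ E] {A : ℕ → ℝ → E} {M : ℕ → ℝ}

lemma norm_sub_sum_taylor_le (hA : ∀ k t, HasDerivAt (A k) (A (k + 1) t) t) {n : ℕ} {C : ℝ}
    (hC : ∀ t, ‖A n t‖ ≤ C) (t : ℝ) {h : ℝ} (hh : 0 ≤ h) :
    ‖A 0 (t + h) - ∑ l ∈ range n, (h ^ l / l.factorial) • A l t‖ ≤ C * (h ^ n / n.factorial) := by
  induction n generalizing A h with
  | zero => simpa using hC (t + h)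
  | succ n ih =>
    have hmonomial (l : ℕ) (s : ℝ) : HasDerivAt (fun s : ℝ => s ^ (l + 1) / (l + 1).factorial)
        (s ^ l / l.factorial) s := by
      refine ((hasDerivAt_pow (l + 1) s).div_const ((l + 1).factorial : ℝ)).congr_deriv ?_
      rw [Nat.factorial_succ, Nat.cast_mul]
      exact mul_div_mul_left _ _ (Nat.cast_ne_zero.2 l.succ_ne_zero)
    have hremainder (s : ℝ) : HasDerivAt
        (fun s => A 0 (t + s) - ∑ l ∈ range (n + 1), (s ^ l / l.factorial) • A l t)
        (A 1 (t + s) - ∑ l ∈ range n, (s ^ l / l.factorial) • A (l + 1) t) s := by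
      simp only [sum_range_succ' _ n, pow_zero]
      exact ((hA 0 (t + s)).comp_const_add t s).sub
        ((HasDerivAt.fun_sum fun l _ => (hmonomial l s).smul_const _).add_const _)
    refine image_norm_le_of_norm_deriv_right_le_deriv_boundary (a := 0) (b := h)
      (fun s _ => (hremainder s).continuousAt.continuousWithinAt)
      (fun s _ => (hremainder s).hasDerivWithinAt) ?_ (fun s => (hmonomial n s).const_mul C)
      (fun s hs => ih (A := fun k => A (k + 1)) (fun k => hA (k + 1)) hC hs.1)
      (Set.right_mem_Icc.2 hh)
    simp [sum_range_succ']

lemma le_mul_pow_div_of_logConvex (hM : ∀ k, 0 < M k)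
    (hlc : ∀ k, M (k + 1) ^ 2 ≤ M k * M (k + 2)) {N k l : ℕ} (h : k + l ≤ N + 1) :
    M (k + l) ≤ M k * (M (N + 1) / M N) ^ l := by
  have hmono : Monotone fun k => M (k + 1) / M k := by
    refine monotone_nat_of_le_succ fun k => ?_
    rw [div_le_div_iff₀ (hM _) (hM _), ← sq, mul_comm]
    exact hlc k
  induction l with
  | zero => simp
  | succ l ih =>
    have hratio : M (k + l + 1) / M (k + l) ≤ M (N + 1) / M N := hmono (by omega)
    calc M (k + l + 1) = M (k + l) * (M (k + l + 1) / M (k + l)) :=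
          (mul_div_cancel₀ _ (hM _).ne').symm
      _ ≤ M k * (M (N + 1) / M N) ^ l * (M (N + 1) / M N) :=
          mul_le_mul (ih (by omega)) hratio (div_pos (hM _) (hM _)).le
            ((hM _).le.trans (ih (by omega)))
      _ = M k * (M (N + 1) / M N) ^ (l + 1) := by ring

lemma exp_mul_logConvex_le (hM : ∀ k, 0 < M k) (hlc : ∀ k, M (k + 1) ^ 2 ≤ M k * M (k + 2))
    {N k l : ℕ} {h : ℝ} (hh : 0 ≤ h) (hhN : h * Real.exp 1 ≤ M N / M (N + 1))
    (hl : k + l ≤ N + 1) :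
    Real.exp ((k + l : ℕ) - (N + 1)) * M (k + l) * h ^ l ≤ Real.exp (k - (N + 1)) * M k := by
  have hMk := hM k
  have hz : 0 ≤ h * Real.exp 1 * (M (N + 1) / M N) := by
    have := div_pos (hM (N + 1)) (hM N)
    positivity
  have hz_le : h * Real.exp 1 * (M (N + 1) / M N) ≤ 1 := by
    rwa [← le_div_iff₀ (div_pos (hM _) (hM _)), one_div_div]
  calc Real.exp ((k + l : ℕ) - (N + 1)) * M (k + l) * h ^ l
      ≤ Real.exp ((k + l : ℕ) - (N + 1)) * (M k * (M (N + 1) / M N) ^ l) * h ^ l := by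
        gcongr
        exact le_mul_pow_div_of_logConvex hM hlc hl
    _ = Real.exp (k - (N + 1)) * M k * (h * Real.exp 1 * (M (N + 1) / M N)) ^ l := by
        rw [Nat.cast_add, add_sub_right_comm, Real.exp_add, ← mul_one (l : ℝ), Real.exp_nat_mul]
        ring
    _ ≤ Real.exp (k - (N + 1)) * M k :=
        mul_le_of_le_one_right (by positivity) (pow_le_one₀ hz hz_le)

/-- The order of flatness measured by Bang's norm `sup_k e ^ (-k) ‖A k t‖ / M k ≤ e ^ (-N)`, for a
family `A` of successive derivatives bounded by `M`. -/
def IsBangFlat (A : ℕ → ℝ → E) (M : ℕ → ℝ) (N : ℕ) (t : ℝ) : Prop :=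
  ∀ k : ℕ, ‖A k t‖ ≤ Real.exp (k - N) * M k

lemma IsBangFlat.add (hM : ∀ k, 0 < M k) (hlc : ∀ k, M (k + 1) ^ 2 ≤ M k * M (k + 2))
    (hA : ∀ k t, HasDerivAt (A k) (A (k + 1) t) t) (hAM : ∀ k t, ‖A k t‖ ≤ M k)
    {N : ℕ} {t h : ℝ} (hh : 0 ≤ h) (hhN : h * Real.exp 1 ≤ M N / M (N + 1))
    (ht : IsBangFlat A M (N + 1) t) : IsBangFlat A M N (t + h) := by
  intro k
  have hMk := hM k
  rcases le_or_gt N k with hNk | hkN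
  · refine (hAM k _).trans (le_mul_of_one_le_left hMk.le ?_)
    rwa [Real.one_le_exp_iff, sub_nonneg, Nat.cast_le]
  obtain ⟨n, hn⟩ : ∃ n, N + 1 = k + n := ⟨N + 1 - k, by omega⟩
  have hterm (l : ℕ) (hl : l ∈ range n) : ‖(h ^ l / l.factorial) • A (k + l) t‖ ≤
      Real.exp (k - (N + 1)) * M k * (1 ^ l / l.factorial) := by
    have hexp := exp_mul_logConvex_le hM hlc hh hhN (k := k) (l := l)
      (by rw [hn]; exact Nat.add_le_add_left (mem_range.1 hl).le k)
    rw [norm_smul, Real.norm_of_nonneg (by positivity), one_pow, mul_one_div, div_mul_eq_mul_div]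
    refine div_le_div_of_nonneg_right (le_trans ?_ hexp) (by positivity)
    rw [mul_comm]
    gcongr
    simpa using ht (k + l)
  have hremainder : M (k + n) * (h ^ n / n.factorial) ≤
      Real.exp (k - (N + 1)) * M k * (1 ^ n / n.factorial) := by
    have hexp := exp_mul_logConvex_le hM hlc hh hhN hn.ge
    rw [← hn, Nat.cast_add_one, sub_self, Real.exp_zero, one_mul] at hexp
    rw [← hn, one_pow, mul_one_div, mul_div_assoc']
    gcongr
  have htaylor := norm_sub_sum_taylor_le (A := fun l => A (k + l)) (fun l => hA (k + l))
    (hAM (k + n)) t hh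
  calc ‖A k (t + h)‖
      ≤ ‖∑ l ∈ range n, (h ^ l / l.factorial) • A (k + l) t‖ +
        ‖A k (t + h) - ∑ l ∈ range n, (h ^ l / l.factorial) • A (k + l) t‖ :=
        norm_le_insert' _ _
    _ ≤ ∑ l ∈ range n, Real.exp (k - (N + 1)) * M k * (1 ^ l / l.factorial) +
        Real.exp (k - (N + 1)) * M k * (1 ^ n / n.factorial) :=
        add_le_add (norm_sum_le_of_le _ hterm) (htaylor.trans hremainder)
    _ = Real.exp (k - (N + 1)) * M k * ∑ l ∈ range (n + 1), (1 : ℝ) ^ l / l.factorial := by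
        rw [sum_range_succ, mul_add, mul_sum]
    _ ≤ Real.exp (k - (N + 1)) * M k * Real.exp 1 := by
        gcongr
        exact Real.sum_le_exp_of_nonneg zero_le_one _
    _ = Real.exp (k - N) * M k := by
        rw [mul_right_comm, ← Real.exp_add]
        ring_nf

lemma isBangFlat_of_mul_exp_one_le_sum (hM : ∀ k, 0 < M k)
    (hlc : ∀ k, M (k + 1) ^ 2 ≤ M k * M (k + 2))
    (hA : ∀ k t, HasDerivAt (A k) (A (k + 1) t) t) (hAM : ∀ k t, ‖A k t‖ ≤ M k)
    (hA0 : ∀ k, A k 0 = 0) {N d : ℕ} {t : ℝ} (ht : 0 ≤ t)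
    (htd : t * Real.exp 1 ≤ ∑ j ∈ range d, M (N + j) / M (N + j + 1)) : IsBangFlat A M N t := by
  have he := Real.exp_pos 1
  induction d generalizing N t with
  | zero =>
    obtain rfl : t = 0 := ht.antisymm' (nonpos_of_mul_nonpos_left (by simpa using htd) he)
    intro k
    rw [hA0, norm_zero]
    exact mul_nonneg (Real.exp_nonneg _) (hM k).le
  | succ d ih =>
    rw [sum_range_succ', add_zero] at htd
    have hratio : 0 ≤ M N / M (N + 1) / Real.exp 1 := by
      have := hM N
      have := hM (N + 1)
      positivity
    set s := max (t - M N / M (N + 1) / Real.exp 1) 0 with hs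
    have hst : s ≤ t := max_le (sub_le_self _ hratio) ht
    have hflat : IsBangFlat A M (N + 1) s := by
      refine ih (le_max_right _ _) ?_
      rw [hs, max_mul_of_nonneg _ _ he.le, zero_mul, sub_mul, div_mul_cancel₀ _ he.ne']
      refine max_le ?_ (sum_nonneg fun j _ => (div_pos (hM _) (hM _)).le)
      simpa only [add_assoc, add_comm 1, sub_le_iff_le_add] using htd
    rw [← add_sub_cancel s t]
    refine hflat.add hM hlc hA hAM (sub_nonneg.2 hst) ?_
    rw [← le_div_iff₀ he, sub_le_comm]
    exact le_max_left _ _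

lemma eq_zero_of_flat_of_nonneg (hM : ∀ k, 0 < M k)
    (hlc : ∀ k, M (k + 1) ^ 2 ≤ M k * M (k + 2))
    (hdiv : ¬ Summable fun k => M k / M (k + 1))
    (hA : ∀ k t, HasDerivAt (A k) (A (k + 1) t) t) (hAM : ∀ k t, ‖A k t‖ ≤ M k)
    (hA0 : ∀ k, A k 0 = 0) {t : ℝ} (ht : 0 ≤ t) (k : ℕ) : A k t = 0 := by
  have hflat (N : ℕ) : IsBangFlat A M N t := by
    have hdivN : ¬ Summable fun j => M (N + j) / M (N + j + 1) := by
      simpa only [add_comm N] using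
        (summable_nat_add_iff (f := fun k => M k / M (k + 1)) N).not.2 hdiv
    rw [not_summable_iff_tendsto_nat_atTop_of_nonneg
      fun j => (div_pos (hM _) (hM _)).le] at hdivN
    obtain ⟨d, hd⟩ := (hdivN.eventually_ge_atTop (t * Real.exp 1)).exists
    exact isBangFlat_of_mul_exp_one_le_sum hM hlc hA hAM hA0 ht hd
  have hlim : Filter.Tendsto (fun N : ℕ => Real.exp (k - N) * M k) Filter.atTop (nhds 0) := by
    rw [← zero_mul (M k)]
    exact (Real.tendsto_exp_atBot.comp (Filter.tendsto_atBot_add_const_left _ _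
      (Filter.tendsto_neg_atTop_atBot.comp tendsto_natCast_atTop_atTop))).mul_const _
  exact norm_le_zero_iff.1 (ge_of_tendsto' hlim fun N => hflat N k)

theorem denjoy_carleman (hM : ∀ k, 0 < M k) (hlc : ∀ k, M (k + 1) ^ 2 ≤ M k * M (k + 2))
    (hdiv : ¬ Summable fun k => M k / M (k + 1))
    (hA : ∀ k t, HasDerivAt (A k) (A (k + 1) t) t) (hAM : ∀ k t, ‖A k t‖ ≤ M k)
    (hA0 : ∀ k, A k 0 = 0) (k : ℕ) (t : ℝ) : A k t = 0 := by
  rcases le_total 0 t with ht | ht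
  · exact eq_zero_of_flat_of_nonneg hM hlc hdiv hA hAM hA0 ht k
  · have hderiv (k : ℕ) (s : ℝ) : HasDerivAt (fun s => (-1 : ℝ) ^ k • A k (-s))
        ((-1 : ℝ) ^ (k + 1) • A (k + 1) (-s)) s := by
      simpa [pow_succ, Function.comp_def] using
        ((hA k (-s)).scomp s (hasDerivAt_neg s)).fun_const_smul ((-1 : ℝ) ^ k)
    have hreflect := eq_zero_of_flat_of_nonneg hM hlc hdiv hderiv
      (fun k s => by simpa [norm_smul] using hAM k (-s)) (by simp [hA0]) (neg_nonneg.2 ht) k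
    simpa using hreflect

end DenjoyCarleman

section CarlemanInequality

lemma div_exp_one_le_factorial_rpow (n : ℕ) :
    ((n : ℝ) + 1) / Real.exp 1 ≤ ((n + 1).factorial : ℝ) ^ ((1 : ℝ) / (n + 1)) := by
  have hpow : (((n : ℝ) + 1) / Real.exp 1) ^ (n + 1) ≤ (n + 1).factorial := by
    have hexp := Real.pow_div_factorial_le_exp (x := (n : ℝ) + 1) (by positivity) (n + 1)
    rw [div_le_iff₀ (by positivity)] at hexp
    rwa [div_pow, ← Real.exp_nat_mul, mul_one, div_le_iff₀' (by positivity), Nat.cast_add_one]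
  rw [one_div, Real.le_rpow_inv_iff_of_pos (by positivity) (by positivity) (by positivity)]
  exact_mod_cast hpow

lemma geom_mean_le_weighted_sum {b : ℕ → ℝ} (hb : ∀ k, 0 ≤ b k) (n : ℕ) :
    (∏ j ∈ range (n + 1), b j) ^ ((1 : ℝ) / (n + 1)) ≤
      Real.exp 1 / ((n : ℝ) + 1) ^ 2 * ∑ j ∈ range (n + 1), ((j : ℝ) + 1) * b j := by
  have hprod : 0 ≤ ∏ j ∈ range (n + 1), b j := prod_nonneg fun j _ => hb j
  have hamgm := Real.geom_mean_le_arith_mean (range (n + 1)) (fun _ => (1 : ℝ))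
    (fun j => ((j : ℝ) + 1) * b j) (fun _ _ => zero_le_one)
    (by rw [sum_const, card_range]; positivity) (fun j _ => mul_nonneg (by positivity) (hb j))
  have hfactorial : ∏ j ∈ range (n + 1), ((j : ℝ) + 1) = (n + 1).factorial := by
    exact_mod_cast prod_range_add_one_eq_factorial (n + 1)
  simp only [Real.rpow_one, prod_mul_distrib, one_mul, sum_const, card_range, nsmul_eq_mul,
    mul_one, hfactorial, Nat.cast_add_one, ← one_div] at hamgm
  rw [Real.mul_rpow (by positivity) hprod] at hamgm
  calc (∏ j ∈ range (n + 1), b j) ^ ((1 : ℝ) / (n + 1))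
      = Real.exp 1 / (n + 1) * (((n : ℝ) + 1) / Real.exp 1 *
          (∏ j ∈ range (n + 1), b j) ^ ((1 : ℝ) / (n + 1))) := by field_simp
    _ ≤ Real.exp 1 / (n + 1) * ((∑ j ∈ range (n + 1), ((j : ℝ) + 1) * b j) / (n + 1)) := by
        gcongr
        refine le_trans ?_ hamgm
        gcongr
        exact div_exp_one_le_factorial_rpow n
    _ = _ := by field_simp

lemma sum_Ico_inv_add_one_sq_le (j n : ℕ) :
    ∑ k ∈ Ico j n, (((k : ℝ) + 1) ^ 2)⁻¹ ≤ 2 / ((j : ℝ) + 1) := by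
  have hIoo : Ioo j (n + 1) = Ico (j + 1) (n + 1) := rfl
  simpa [hIoo, ← sum_Ico_add' (fun k : ℕ => ((k : ℝ) ^ 2)⁻¹) j n 1] using
    sum_Ioo_inv_sq_le (α := ℝ) j (n + 1)

/-- Carleman's inequality, with the constant `2 e`. -/
lemma summable_geom_mean {b : ℕ → ℝ} (hb : ∀ k, 0 ≤ b k) (hs : Summable b) :
    Summable fun n : ℕ => (∏ j ∈ range (n + 1), b j) ^ ((1 : ℝ) / (n + 1)) := by
  refine summable_of_sum_range_le (c := 2 * Real.exp 1 * ∑' j, b j)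
    (fun n => Real.rpow_nonneg (prod_nonneg fun j _ => hb j) _) fun n => ?_
  calc ∑ k ∈ range n, (∏ j ∈ range (k + 1), b j) ^ ((1 : ℝ) / (k + 1))
      ≤ ∑ k ∈ range n, Real.exp 1 / ((k : ℝ) + 1) ^ 2 *
          ∑ j ∈ range (k + 1), ((j : ℝ) + 1) * b j :=
        sum_le_sum fun k _ => geom_mean_le_weighted_sum hb k
    _ = ∑ j ∈ range n, Real.exp 1 * (((j : ℝ) + 1) * b j) *
          ∑ k ∈ Ico j n, (((k : ℝ) + 1) ^ 2)⁻¹ := by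
        simp only [mul_sum]
        rw [sum_comm' (t' := range n) (s' := fun j => Ico j n) fun k j => by
          simp only [mem_range, mem_Ico]; omega]
        exact sum_congr rfl fun j _ => sum_congr rfl fun k _ => by ring
    _ ≤ ∑ j ∈ range n, Real.exp 1 * (((j : ℝ) + 1) * b j) * (2 / ((j : ℝ) + 1)) := by
        refine sum_le_sum fun j _ => ?_
        have := hb j
        gcongr
        exact sum_Ico_inv_add_one_sq_le j n
    _ = 2 * Real.exp 1 * ∑ j ∈ range n, b j := by
        rw [mul_sum]
        exact sum_congr rfl fun j _ => by field_simp
    _ ≤ 2 * Real.exp 1 * ∑' j, b j := by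
        gcongr
        exact hs.sum_le_tsum _ fun j _ => hb j

end CarlemanInequality

section RealMoments

variable {Ω : Type*} [MeasurableSpace Ω] {μ : Measure Ω} {f : Ω → ℝ}

lemma integral_abs_mul_le_sqrt_mul_sqrt {g : Ω → ℝ} (hf : MemLp f 2 μ) (hg : MemLp g 2 μ) :
    ∫ ω, |f ω * g ω| ∂μ ≤ √(∫ ω, f ω ^ 2 ∂μ) * √(∫ ω, g ω ^ 2 ∂μ) := by
  have hholder := integral_mul_norm_le_Lp_mul_Lq Real.HolderConjugate.two_two
    (μ := μ) (f := f) (g := g) (by simpa using hf) (by simpa using hg)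
  simpa [abs_mul, Real.sqrt_eq_rpow] using hholder

/-- The one-dimensional Carleman condition on the even moments of a random variable. The index is
shifted to avoid the degenerate exponent `-1 / 0` at `d = 0`. -/
def HasCarlemanMoments (f : Ω → ℝ) (μ : Measure Ω) : Prop :=
  ¬ Summable fun d : ℕ => (∫ ω, f ω ^ (2 * (d + 1)) ∂μ) ^ (-(1 : ℝ) / (2 * (d + 1)))

lemma HasCarlemanMoments.not_ae_eq_zero (hcar : HasCarlemanMoments f μ) :
    ¬ ∀ᵐ ω ∂μ, f ω = 0 := by
  intro hf
  refine hcar (summable_zero.congr fun d => ?_)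
  have hint : ∫ ω, f ω ^ (2 * (d + 1)) ∂μ = 0 :=
    integral_eq_zero_of_ae (hf.mono fun ω hω => by simp [hω])
  rw [hint, Real.zero_rpow (div_ne_zero (by norm_num) (by positivity))]

lemma HasCarlemanMoments.integral_pow_pos (hcar : HasCarlemanMoments f μ)
    (hf : ∀ k : ℕ, Integrable (fun ω => f ω ^ k) μ) (k : ℕ) : 0 < ∫ ω, f ω ^ (2 * k) ∂μ := by
  have hnonneg (ω : Ω) : 0 ≤ f ω ^ (2 * k) := (even_two_mul k).pow_nonneg _
  refine (integral_nonneg hnonneg).lt_of_ne' fun hzero => hcar.not_ae_eq_zero ?_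
  exact ((integral_eq_zero_iff_of_nonneg hnonneg (hf _)).1 hzero).mono
    fun ω hω => eq_zero_of_pow_eq_zero hω

lemma memLp_two_pow (hf : ∀ k : ℕ, Integrable (fun ω => f ω ^ k) μ) (k : ℕ) :
    MemLp (fun ω => f ω ^ k) 2 μ := by
  refine (memLp_two_iff_integrable_sq (hf k).aestronglyMeasurable).2 ?_
  simpa only [← pow_mul] using hf (k * 2)

lemma sqrt_sqrt_integral_pow_sq_le (hf : ∀ k : ℕ, Integrable (fun ω => f ω ^ k) μ) (k : ℕ) :
    √√(∫ ω, f ω ^ (2 * (2 * (k + 1))) ∂μ) ^ 2 ≤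
      √√(∫ ω, f ω ^ (2 * (2 * k)) ∂μ) * √√(∫ ω, f ω ^ (2 * (2 * (k + 2))) ∂μ) := by
  rw [Real.sq_sqrt (Real.sqrt_nonneg _), ← Real.sqrt_mul (Real.sqrt_nonneg _)]
  refine Real.sqrt_le_sqrt ?_
  calc ∫ ω, f ω ^ (2 * (2 * (k + 1))) ∂μ = ∫ ω, |f ω ^ (2 * k) * f ω ^ (2 * (k + 2))| ∂μ := by
        refine integral_congr_ae (.of_forall fun ω => ?_)
        simp only [← pow_add]
        rw [abs_of_nonneg (Even.pow_nonneg ⟨2 * k + 2, by ring⟩ _)]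
        ring
    _ ≤ _ := by
        simpa only [← pow_mul'] using integral_abs_mul_le_sqrt_mul_sqrt
          (memLp_two_pow hf (2 * k)) (memLp_two_pow hf (2 * (k + 2)))

/-- A form of Lyapunov's inequality: normalize `f` by `c` so that its `2 d`-th moment is one. -/
lemma integral_pow_mul_pow_le [IsFiniteMeasure μ] (hf : ∀ k : ℕ, Integrable (fun ω => f ω ^ k) μ)
    {c : ℝ} {k d : ℕ} (hkd : k ≤ d) (hc : c ^ (2 * d) * ∫ ω, f ω ^ (2 * d) ∂μ ≤ 1) :
    c ^ (2 * k) * ∫ ω, f ω ^ (2 * k) ∂μ ≤ μ.real Set.univ + 1 := by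
  have hpow (t : ℝ) : t ^ (2 * k) ≤ 1 + t ^ (2 * d) := by
    rw [pow_mul, pow_mul]
    rcases le_total (t ^ 2) 1 with ht | ht
    · exact (pow_le_one₀ (sq_nonneg t) ht).trans (le_add_of_nonneg_right (by positivity))
    · exact (pow_le_pow_right₀ ht hkd).trans (le_add_of_nonneg_left zero_le_one)
  have hint (l : ℕ) : Integrable (fun ω => (c * f ω) ^ l) μ := by
    simpa only [mul_pow] using (hf l).const_mul (c ^ l)
  calc c ^ (2 * k) * ∫ ω, f ω ^ (2 * k) ∂μ = ∫ ω, (c * f ω) ^ (2 * k) ∂μ := by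
        simp only [mul_pow, integral_const_mul]
    _ ≤ ∫ ω, (1 + (c * f ω) ^ (2 * d)) ∂μ :=
        integral_mono (hint _) ((integrable_const 1).add (hint _)) fun ω => hpow _
    _ = μ.real Set.univ + c ^ (2 * d) * ∫ ω, f ω ^ (2 * d) ∂μ := by
        rw [integral_add (integrable_const 1) (hint _)]
        simp [mul_pow, integral_const_mul]
    _ ≤ μ.real Set.univ + 1 := by gcongr

lemma le_mul_rpow_of_mul_pow_le {a K M₀ M : ℝ} {k : ℕ} (ha : 0 ≤ a) (hK : 0 < K) (hM₀ : 0 < M₀)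
    (hM : 0 < M) (h : M * a ^ (k + 1) ≤ K) :
    a ≤ (min 1 (M₀ / K))⁻¹ * (M₀ / M) ^ ((1 : ℝ) / (k + 1)) := by
  set ρ := min 1 (M₀ / K)
  have hρ : 0 < ρ := lt_min one_pos (div_pos hM₀ hK)
  have hρ_pow : ρ ^ (k + 1) ≤ M₀ / K :=
    (pow_le_of_le_one hρ.le (min_le_left _ _) k.succ_ne_zero).trans (min_le_right _ _)
  have hpow : (ρ * a) ^ (k + 1) ≤ M₀ / M := by
    rw [le_div_iff₀ hM]
    calc (ρ * a) ^ (k + 1) * M = ρ ^ (k + 1) * (M * a ^ (k + 1)) := by ring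
      _ ≤ M₀ / K * K := by gcongr
      _ = M₀ := div_mul_cancel₀ _ hK.ne'
  rw [← div_eq_inv_mul, le_div_iff₀' hρ, one_div,
    Real.le_rpow_inv_iff_of_pos (by positivity) (by positivity) (by positivity)]
  exact_mod_cast hpow

/-- The two applications of the comparison, to even and to odd indices, are what Carleman's
inequality needs: it only sees about half of the terms `a d`. -/
lemma summable_of_summable_ratio {M a : ℕ → ℝ} {K : ℝ} (hM : ∀ k, 0 < M k)
    (hs : Summable fun k => M k / M (k + 1)) (ha : ∀ d, 0 ≤ a d) (hK : 0 < K)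
    (hMa : ∀ k d, 2 * (k + 1) ≤ d + 1 → M (k + 1) * a d ^ (k + 1) ≤ K) : Summable a := by
  have htelescope (k : ℕ) : ∏ i ∈ range k, M i / M (i + 1) = M 0 / M k := by
    induction k with
    | zero => simp [(hM 0).ne']
    | succ k ih => rw [prod_range_succ, ih, div_mul_div_cancel₀ (hM k).ne']
  have hbound : Summable fun k : ℕ =>
      (min 1 (M 0 / K))⁻¹ * (M 0 / M (k + 1)) ^ ((1 : ℝ) / (k + 1)) := by
    simp only [← htelescope]
    exact (summable_geom_mean (fun k => (div_pos (hM _) (hM _)).le) hs).mul_left _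
  have hle (k d : ℕ) (hkd : 2 * (k + 1) ≤ d + 1) :
      a d ≤ (min 1 (M 0 / K))⁻¹ * (M 0 / M (k + 1)) ^ ((1 : ℝ) / (k + 1)) :=
    le_mul_rpow_of_mul_pow_le (ha d) hK (hM 0) (hM _) (hMa k d hkd)
  have heven : Summable fun k => a (2 * k + 1) :=
    hbound.of_nonneg_of_le (fun _ => ha _) fun k => hle k _ (by omega)
  have hodd : Summable fun k => a (2 * k + 1 + 1) :=
    hbound.of_nonneg_of_le (fun _ => ha _) fun k => hle k _ (by omega)
  exact (summable_nat_add_iff 1).1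
    (heven.hasSum.even_add_odd (f := fun i => a (i + 1)) hodd.hasSum).summable

lemma HasCarlemanMoments.not_summable_ratio [IsFiniteMeasure μ] (hcar : HasCarlemanMoments f μ)
    (hf : ∀ k : ℕ, Integrable (fun ω => f ω ^ k) μ) :
    ¬ Summable fun k : ℕ => √√(∫ ω, f ω ^ (2 * (2 * k)) ∂μ) /
      √√(∫ ω, f ω ^ (2 * (2 * (k + 1))) ∂μ) := by
  have hpos (k : ℕ) := hcar.integral_pow_pos hf k
  refine fun hs => hcar (summable_of_summable_ratio (K := √√(μ.real Set.univ + 1))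
    (fun k => Real.sqrt_pos.2 (Real.sqrt_pos.2 (hpos _))) hs
    (fun d => Real.rpow_nonneg (hpos _).le _) (by positivity) fun k d hkd => ?_)
  set a := (∫ ω, f ω ^ (2 * (d + 1)) ∂μ) ^ (-(1 : ℝ) / (2 * (d + 1)))
  have ha_pow : a ^ (2 * (d + 1)) * ∫ ω, f ω ^ (2 * (d + 1)) ∂μ = 1 := by
    rw [← Real.rpow_mul_natCast (hpos _).le]
    push_cast
    rw [div_mul_cancel₀ _ (by positivity), Real.rpow_neg_one, inv_mul_cancel₀ (hpos _).ne']
  have hlyapunov := integral_pow_mul_pow_le hf hkd ha_pow.le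
  refine Real.le_sqrt_of_sq_le (Real.le_sqrt_of_sq_le ?_)
  calc ((√√(∫ ω, f ω ^ (2 * (2 * (k + 1))) ∂μ) * a ^ (k + 1)) ^ 2) ^ 2
      = (√√(∫ ω, f ω ^ (2 * (2 * (k + 1))) ∂μ) ^ 2) ^ 2 * a ^ (2 * (2 * (k + 1))) := by ring
    _ = a ^ (2 * (2 * (k + 1))) * ∫ ω, f ω ^ (2 * (2 * (k + 1))) ∂μ := by
        rw [Real.sq_sqrt (Real.sqrt_nonneg _), Real.sq_sqrt (hpos _).le, mul_comm]
    _ ≤ _ := hlyapunov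

end RealMoments

section QuasiAnalyticity

variable {Ω : Type*} [MeasurableSpace Ω] {μ : Measure Ω} {f : Ω → ℝ} {g : Ω → ℂ}

lemma norm_pow_mul_exp_mul (x t : ℝ) (z : ℂ) (k : ℕ) :
    ‖(Complex.I * x) ^ k * Complex.exp (Complex.I * (t * x : ℝ)) * z‖ = ‖(x : ℂ) ^ k * z‖ := by
  simp only [norm_mul, norm_pow, Complex.norm_I, one_mul, Complex.norm_exp_I_mul_ofReal, mul_one]

lemma integrable_pow_mul_exp_mul (hf : AEMeasurable f μ)
    (hg : ∀ k : ℕ, Integrable (fun ω => (f ω : ℂ) ^ k * g ω) μ) (k : ℕ) (t : ℝ) :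
    Integrable (fun ω =>
      (Complex.I * f ω) ^ k * Complex.exp (Complex.I * (t * f ω : ℝ)) * g ω) μ := by
  have hgm : AEStronglyMeasurable g μ := by simpa using (hg 0).aestronglyMeasurable
  refine (hg k).mono (AEStronglyMeasurable.mul ?_ hgm) (.of_forall fun ω => ?_)
  · exact AEMeasurable.aestronglyMeasurable (by fun_prop)
  · rw [norm_pow_mul_exp_mul]

lemma hasDerivAt_integral_pow_mul_exp_mul (hf : AEMeasurable f μ)
    (hg : ∀ k : ℕ, Integrable (fun ω => (f ω : ℂ) ^ k * g ω) μ) (k : ℕ) (t : ℝ) :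
    HasDerivAt (fun t : ℝ => ∫ ω,
        (Complex.I * f ω) ^ k * Complex.exp (Complex.I * (t * f ω : ℝ)) * g ω ∂μ)
      (∫ ω, (Complex.I * f ω) ^ (k + 1) * Complex.exp (Complex.I * (t * f ω : ℝ)) * g ω ∂μ) t := by
  have hint := integrable_pow_mul_exp_mul hf hg
  refine (hasDerivAt_integral_of_dominated_loc_of_deriv_le Filter.univ_mem
    (.of_forall fun s => (hint k s).aestronglyMeasurable) (hint k t)
    (hint (k + 1) t).aestronglyMeasurable
    (.of_forall fun ω s _ => (norm_pow_mul_exp_mul (f ω) s (g ω) (k + 1)).le)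
    (hg (k + 1)).norm (.of_forall fun ω s _ => ?_)).2
  have hphase : HasDerivAt (fun s : ℝ => Complex.I * (s * f ω : ℝ)) (Complex.I * f ω) s := by
    simpa using ((hasDerivAt_mul_const (f ω)).ofReal_comp (z := s)).const_mul Complex.I
  exact ((hphase.cexp.const_mul _).mul_const _).congr_deriv (by ring)

theorem integral_exp_mul_eq_zero_of_integral_pow_mul_eq_zero (hf : AEMeasurable f μ)
    {M : ℕ → ℝ} (hM : ∀ k, 0 < M k) (hlc : ∀ k, M (k + 1) ^ 2 ≤ M k * M (k + 2))
    (hdiv : ¬ Summable fun k => M k / M (k + 1))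
    (hg : ∀ k : ℕ, Integrable (fun ω => (f ω : ℂ) ^ k * g ω) μ)
    (hgM : ∀ k : ℕ, ∫ ω, ‖(f ω : ℂ) ^ k * g ω‖ ∂μ ≤ M k)
    (hzero : ∀ k : ℕ, ∫ ω, (f ω : ℂ) ^ k * g ω ∂μ = 0) (t : ℝ) :
    ∫ ω, Complex.exp (Complex.I * (t * f ω : ℝ)) * g ω ∂μ = 0 := by
  have hbound (k : ℕ) (t : ℝ) : ‖∫ ω, (Complex.I * f ω) ^ k *
      Complex.exp (Complex.I * (t * f ω : ℝ)) * g ω ∂μ‖ ≤ M k := by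
    refine (norm_integral_le_integral_norm _).trans (le_trans (le_of_eq ?_) (hgM k))
    simp only [norm_pow_mul_exp_mul]
  have hmoment (k : ℕ) : ∫ ω, (Complex.I * f ω) ^ k *
      Complex.exp (Complex.I * ((0 : ℝ) * f ω : ℝ)) * g ω ∂μ = 0 := by
    simp [mul_pow, mul_assoc, integral_const_mul, hzero]
  simpa using denjoy_carleman hM hlc hdiv (hasDerivAt_integral_pow_mul_exp_mul hf hg) hbound
    hmoment 0 t

lemma HasCarlemanMoments.integral_exp_mul_eq_zero [IsFiniteMeasure μ]
    (hcar : HasCarlemanMoments f μ) (hf : ∀ k : ℕ, Integrable (fun ω => f ω ^ k) μ) {D : ℝ}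
    (hg : ∀ k : ℕ, Integrable (fun ω => (f ω : ℂ) ^ k * g ω) μ)
    (hgD : ∀ k : ℕ, ∫ ω, ‖(f ω : ℂ) ^ k * g ω‖ ∂μ ≤ D * √√(∫ ω, f ω ^ (2 * (2 * k)) ∂μ))
    (hzero : ∀ k : ℕ, ∫ ω, (f ω : ℂ) ^ k * g ω ∂μ = 0) (t : ℝ) :
    ∫ ω, Complex.exp (Complex.I * (t * f ω : ℝ)) * g ω ∂μ = 0 := by
  have hD : 0 < max D 1 := lt_max_of_lt_right one_pos
  have hfm : AEMeasurable f μ := by simpa using (hf 1).aemeasurable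
  refine integral_exp_mul_eq_zero_of_integral_pow_mul_eq_zero hfm
    (M := fun k => max D 1 * √√(∫ ω, f ω ^ (2 * (2 * k)) ∂μ)) (fun k => ?_) (fun k => ?_) ?_ hg
    (fun k => (hgD k).trans ?_) hzero t
  · exact mul_pos hD (Real.sqrt_pos.2 (Real.sqrt_pos.2 (hcar.integral_pow_pos hf _)))
  · rw [mul_pow, mul_mul_mul_comm, ← sq]
    exact mul_le_mul_of_nonneg_left (sqrt_sqrt_integral_pow_sq_le hf k) (sq_nonneg _)
  · simpa only [mul_div_mul_left _ _ hD.ne'] using hcar.not_summable_ratio hf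
  · gcongr
    exact le_max_left _ _

end QuasiAnalyticity

section FourierUniqueness

variable {E : Type*} [NormedAddCommGroup E] [NormedSpace ℝ E] [MeasurableSpace E]
  {ν : Measure E} {ψ : E → ℝ}

lemma charFunDual_withDensity_ofReal (hψ : AEMeasurable ψ ν) (L : StrongDual ℝ E) :
    charFunDual (ν.withDensity fun y => ENNReal.ofReal (ψ y)) L =
      ∫ y, Complex.exp (Complex.I * L y) * (max (ψ y) 0 : ℝ) ∂ν := by
  rw [charFunDual_apply, integral_withDensity_eq_integral_toReal_smul₀ hψ.ennreal_ofReal (by simp)]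
  refine integral_congr_ae (.of_forall fun y => ?_)
  simp only [ENNReal.toReal_ofReal', Complex.real_smul]
  rw [mul_comm, mul_comm Complex.I]

lemma ae_eq_zero_of_integral_exp_mul_eq_zero [CompleteSpace E] [SecondCountableTopology E]
    [BorelSpace E] (hψ : Integrable ψ ν)
    (hzero : ∀ L : StrongDual ℝ E, ∫ y, Complex.exp (Complex.I * L y) * ψ y ∂ν = 0) :
    ψ =ᵐ[ν] 0 := by
  have := isFiniteMeasure_withDensity hψ.lintegral_lt_top.ne
  have hneg : Integrable (fun y => -ψ y) ν := hψ.neg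
  have := isFiniteMeasure_withDensity hneg.lintegral_lt_top.ne
  have hint {u : E → ℝ} (hu : Integrable u ν) (L : StrongDual ℝ E) :
      Integrable (fun y => Complex.exp (Complex.I * L y) * (u y : ℂ)) ν := by
    exact hu.ofReal.bdd_mul (c := 1) (Continuous.aestronglyMeasurable (by fun_prop))
      (.of_forall fun y => (Complex.norm_exp_I_mul_ofReal _).le)
  have hmeasures : ν.withDensity (fun y => ENNReal.ofReal (ψ y)) =
      ν.withDensity (fun y => ENNReal.ofReal (-ψ y)) := by
    refine Measure.ext_of_charFunDual (funext fun L => ?_)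
    rw [charFunDual_withDensity_ofReal hψ.aemeasurable,
      charFunDual_withDensity_ofReal hneg.aemeasurable, ← sub_eq_zero,
      ← integral_sub (hint hψ.pos_part L) (hint hψ.neg_part L), ← hzero L]
    refine integral_congr_ae (.of_forall fun y => ?_)
    simp only [← mul_sub, ← Complex.ofReal_sub]
    rw [max_zero_sub_max_neg_zero_eq_self]
  rw [withDensity_eq_iff hψ.aemeasurable.ennreal_ofReal hneg.aemeasurable.ennreal_ofReal
    hψ.lintegral_lt_top.ne] at hmeasures
  filter_upwards [hmeasures] with y hy
  have hpart := congrArg ENNReal.toReal hy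
  simp only [ENNReal.toReal_ofReal'] at hpart
  rw [Pi.zero_apply, ← max_zero_sub_max_neg_zero_eq_self (ψ y), hpart, sub_self]

end FourierUniqueness

section CarlemanDensity

variable {m : ℕ} {ν : Measure (Fin m → ℝ)}

lemma momentsFinite.integrable (hmom : momentsFinite ν) (h : MvPolynomial (Fin m) ℝ) :
    Integrable (fun y => eval y h) ν :=
  (integrable_norm_iff h.continuous_eval.aestronglyMeasurable).1 (hmom h)

lemma momentsFinite.isFiniteMeasure (hmom : momentsFinite ν) : IsFiniteMeasure ν := by
  simpa [integrable_const_iff] using hmom.integrable 1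

lemma momentsFinite.integrable_pow (hmom : momentsFinite ν) (j : Fin m) (k : ℕ) :
    Integrable (fun y => y j ^ k) ν := by
  simpa using hmom.integrable (X j ^ k)

lemma momentsFinite.memLp_two (hmom : momentsFinite ν) (h : MvPolynomial (Fin m) ℝ) :
    MemLp (fun y => eval y h) 2 ν := by
  rw [memLp_two_iff_integrable_sq h.continuous_eval.aestronglyMeasurable]
  simpa [sq] using hmom.integrable (h * h)

lemma momentsFinite.integral_abs_pow_mul_le (hmom : momentsFinite ν) {φ : (Fin m → ℝ) → ℝ}
    (hφ : MemLp φ 2 ν) (j : Fin m) (Q : MvPolynomial (Fin m) ℝ) (k : ℕ) :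
    ∫ y, |y j ^ k * (eval y Q * φ y)| ∂ν ≤
      √√(∫ y, eval y Q ^ 4 ∂ν) * √(∫ y, φ y ^ 2 ∂ν) * √√(∫ y, y j ^ (2 * (2 * k)) ∂ν) := by
  have hsq : ∫ y, eval y (X j ^ k * Q) ^ 2 ∂ν ≤
      √(∫ y, y j ^ (2 * (2 * k)) ∂ν) * √(∫ y, eval y Q ^ 4 ∂ν) := by
    have := integral_abs_mul_le_sqrt_mul_sqrt (hmom.memLp_two ((X j ^ k) ^ 2))
      (hmom.memLp_two (Q ^ 2))
    simp only [← mul_pow, map_pow, abs_sq] at this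
    simpa [← pow_mul, mul_comm, mul_left_comm] using this
  calc ∫ y, |y j ^ k * (eval y Q * φ y)| ∂ν = ∫ y, |eval y (X j ^ k * Q) * φ y| ∂ν := by
        simp [mul_assoc]
    _ ≤ √(∫ y, eval y (X j ^ k * Q) ^ 2 ∂ν) * √(∫ y, φ y ^ 2 ∂ν) :=
        integral_abs_mul_le_sqrt_mul_sqrt (hmom.memLp_two _) hφ
    _ ≤ √(√(∫ y, y j ^ (2 * (2 * k)) ∂ν) * √(∫ y, eval y Q ^ 4 ∂ν)) *
          √(∫ y, φ y ^ 2 ∂ν) := by gcongr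
    _ = _ := by
        rw [Real.sqrt_mul (Real.sqrt_nonneg _)]
        ring

lemma Carleman.integral_exp_sum_mul_eq_zero (hcar : Carleman ν) (hmom : momentsFinite ν)
    {φ : (Fin m → ℝ) → ℝ} (hφ : MemLp φ 2 ν) {𝔞 : Ideal (MvPolynomial (Fin m) ℝ)}
    (horth : ∀ Q ∈ 𝔞, ∫ y, eval y Q * φ y ∂ν = 0) (t : Fin m → ℝ) (J : Finset (Fin m))
    {Q : MvPolynomial (Fin m) ℝ} (hQ : Q ∈ 𝔞) :
    ∫ y, Complex.exp (Complex.I * (∑ j ∈ J, t j * y j : ℝ)) * (eval y Q * φ y : ℝ) ∂ν = 0 := by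
  induction J using Finset.induction_on generalizing Q with
  | empty =>
    simp only [sum_empty, Complex.ofReal_zero, mul_zero, Complex.exp_zero, one_mul]
    rw [integral_complex_ofReal, horth Q hQ, Complex.ofReal_zero]
  | insert j J hj ih =>
    have := hmom.isFiniteMeasure
    set g : (Fin m → ℝ) → ℂ := fun y =>
      Complex.exp (Complex.I * (∑ j ∈ J, t j * y j : ℝ)) * (eval y Q * φ y : ℝ)
    have hpow_mul (k : ℕ) : (fun y => (y j : ℂ) ^ k * g y) = fun y =>
        Complex.exp (Complex.I * (∑ j ∈ J, t j * y j : ℝ)) *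
          (eval y (X j ^ k * Q) * φ y : ℝ) := by
      ext y
      simp only [g, map_mul, map_pow, eval_X, Complex.ofReal_mul, Complex.ofReal_pow]
      ring
    have hint (k : ℕ) : Integrable (fun y => (y j : ℂ) ^ k * g y) ν := by
      rw [hpow_mul]
      exact ((hmom.memLp_two (X j ^ k * Q)).integrable_mul hφ).ofReal.bdd_mul (c := 1)
        (Continuous.aestronglyMeasurable (by fun_prop))
        (.of_forall fun y => (Complex.norm_exp_I_mul_ofReal _).le)
    have hbound (k : ℕ) : ∫ y, ‖(y j : ℂ) ^ k * g y‖ ∂ν ≤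
        √√(∫ y, eval y Q ^ 4 ∂ν) * √(∫ y, φ y ^ 2 ∂ν) * √√(∫ y, y j ^ (2 * (2 * k)) ∂ν) := by
      refine le_trans (le_of_eq ?_) (hmom.integral_abs_pow_mul_le hφ j Q k)
      simp [g, abs_mul, Complex.norm_exp_I_mul_ofReal, -Complex.ofReal_sum]
    have hzero (k : ℕ) : ∫ y, (y j : ℂ) ^ k * g y ∂ν = 0 := by
      rw [hpow_mul]
      exact ih (𝔞.mul_mem_left _ hQ)
    have hexp := HasCarlemanMoments.integral_exp_mul_eq_zero (hcar j) (hmom.integrable_pow j)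
      hint hbound hzero (t j)
    simpa only [g, sum_insert hj, Complex.ofReal_add, mul_add, Complex.exp_add, mul_assoc]
      using hexp

lemma Carleman.ae_eq_zero_of_integral_mul_eq_zero (hcar : Carleman ν) (hmom : momentsFinite ν)
    {φ : (Fin m → ℝ) → ℝ} (hφ : MemLp φ 2 ν) {𝔞 : Ideal (MvPolynomial (Fin m) ℝ)}
    (horth : ∀ Q ∈ 𝔞, ∫ y, eval y Q * φ y ∂ν = 0) {s : MvPolynomial (Fin m) ℝ} (hs : s ∈ 𝔞) :
    (fun y => eval y s * φ y) =ᵐ[ν] 0 := by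
  refine ae_eq_zero_of_integral_exp_mul_eq_zero ((hmom.memLp_two s).integrable_mul hφ) fun L => ?_
  have hL (y : Fin m → ℝ) : L y = ∑ j, L (Pi.single j 1) * y j := by
    conv_lhs => rw [pi_eq_sum_univ' y]
    simp [mul_comm]
  simpa only [← hL] using
    hcar.integral_exp_sum_mul_eq_zero hmom hφ horth (fun j => L (Pi.single j 1)) univ hs

/-- The map sending a polynomial to its class in `L²(ν)`. -/
noncomputable def momentsFinite.toLp (hmom : momentsFinite ν) :
    MvPolynomial (Fin m) ℝ →ₗ[ℝ] Lp ℝ 2 ν where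
  toFun h := (hmom.memLp_two h).toLp _
  map_add' h₁ h₂ := by simp only [map_add]; rfl
  map_smul' c h := by simp only [smul_eval]; rfl

lemma momentsFinite.coeFn_toLp (hmom : momentsFinite ν) (h : MvPolynomial (Fin m) ℝ) :
    hmom.toLp h =ᵐ[ν] fun y => eval y h :=
  (hmom.memLp_two h).coeFn_toLp

theorem Carleman.dense_toLp_ideal (hcar : Carleman ν) (hmom : momentsFinite ν)
    {𝔞 : Ideal (MvPolynomial (Fin m) ℝ)} {s : MvPolynomial (Fin m) ℝ} (hs : s ∈ 𝔞)
    (hs0 : ∀ y, eval y s ≠ 0) : Dense (hmom.toLp '' 𝔞) := by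
  have hdense : ((𝔞.restrictScalars ℝ).map hmom.toLp).topologicalClosure = ⊤ := by
    rw [Submodule.topologicalClosure_eq_top_iff, Submodule.eq_bot_iff]
    intro φ hφ
    have horth (Q) (hQ : Q ∈ 𝔞) : ∫ y, eval y Q * φ y ∂ν = 0 := by
      rw [← (Submodule.mem_orthogonal _ _).1 hφ (hmom.toLp Q) (Submodule.mem_map_of_mem hQ),
        L2.inner_def]
      refine integral_congr_ae ((hmom.coeFn_toLp Q).mono fun y hy => ?_)
      simp [hy, mul_comm]
    rw [Lp.eq_zero_iff_ae_eq_zero]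
    filter_upwards [hcar.ae_eq_zero_of_integral_mul_eq_zero hmom (Lp.memLp φ) horth hs] with y hy
    exact (mul_eq_zero.1 hy).resolve_left (hs0 y)
  exact Submodule.dense_iff_topologicalClosure_eq_top.2 hdense

lemma integral_mul_sq_nonneg_of_dense {Ω : Type*} [MeasurableSpace Ω] {μ : Measure Ω} {w : Ω → ℝ}
    (hw : MemLp w ⊤ μ) {D : Set (Lp ℝ 2 μ)} (hD : Dense D)
    (hnonneg : ∀ φ ∈ D, 0 ≤ ∫ ω, w ω * φ ω ^ 2 ∂μ) (φ : Lp ℝ 2 μ) :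
    0 ≤ ∫ ω, w ω * φ ω ^ 2 ∂μ := by
  set T : Lp ℝ 2 μ →L[ℝ] Lp ℝ 2 μ :=
    (ContinuousLinearMap.mul ℝ ℝ).holderL μ ⊤ 2 2 (hw.toLp w)
  have hT (φ : Lp ℝ 2 μ) : T φ =ᵐ[μ] fun ω => w ω * φ ω := by
    filter_upwards [(ContinuousLinearMap.mul ℝ ℝ).coeFn_holder (r := 2) (hw.toLp w) φ,
      hw.coeFn_toLp] with ω hmul hw_eq
    rw [← hw_eq]
    exact hmul
  have hinner (φ : Lp ℝ 2 μ) : ∫ ω, w ω * φ ω ^ 2 ∂μ = inner ℝ φ (T φ) := by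
    rw [L2.inner_def]
    refine integral_congr_ae ((hT φ).mono fun ω hω => ?_)
    simp only [hω, RCLike.inner_apply, conj_trivial]
    ring
  simp only [hinner] at hnonneg ⊢
  exact hD.induction hnonneg
    (isClosed_le continuous_const (continuous_id.inner T.continuous)) φ

/-- The weight `g / s²` with `s = 1 + g²` is bounded, so the hypothesis on squares `h²` extends by
density of the multiples of `s` from `h * s` to `s` times the indicator of `U`. -/
lemma Carleman.setIntegral_eval_nonneg (hcar : Carleman ν) (hmom : momentsFinite ν)
    {g : MvPolynomial (Fin m) ℝ}
    (hg : ∀ h : MvPolynomial (Fin m) ℝ, 0 ≤ ∫ y, eval y h ^ 2 * eval y g ∂ν)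
    {U : Set (Fin m → ℝ)} (hU : MeasurableSet U) : 0 ≤ ∫ y in U, eval y g ∂ν := by
  set s : MvPolynomial (Fin m) ℝ := 1 + g ^ 2 with hs
  have hs_eval (y : Fin m → ℝ) : eval y s = 1 + eval y g ^ 2 := by simp [hs]
  have hs_pos (y : Fin m → ℝ) : 0 < eval y s := by rw [hs_eval]; positivity
  have hw : MemLp (fun y => eval y g / eval y s ^ 2) ⊤ ν := by
    refine memLp_top_of_bound (g.continuous_eval.div (s.continuous_eval.pow 2)
      fun y => (pow_pos (hs_pos y) 2).ne').aestronglyMeasurable 1 (.of_forall fun y => ?_)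
    rw [norm_div, norm_pow, div_le_one (pow_pos (norm_pos_iff.2 (hs_pos y).ne') 2),
      Real.norm_eq_abs, Real.norm_eq_abs, sq_abs, hs_eval, abs_le]
    constructor <;> nlinarith [sq_nonneg (eval y g + 1), sq_nonneg (eval y g - 1)]
  have hnonneg : ∀ φ ∈ hmom.toLp '' Ideal.span {s},
      0 ≤ ∫ y, eval y g / eval y s ^ 2 * φ y ^ 2 ∂ν := by
    rintro _ ⟨Q, hQ, rfl⟩
    obtain ⟨h, rfl⟩ := Ideal.mem_span_singleton'.1 hQ
    refine (hg h).trans_eq (integral_congr_ae ((hmom.coeFn_toLp (h * s)).mono fun y hy => ?_))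
    have := (hs_pos y).ne'
    simp only [hy, map_mul]
    field_simp
  have hφ : MemLp (U.indicator fun y => eval y s) 2 ν := (hmom.memLp_two s).indicator hU
  rw [← integral_indicator hU]
  refine (integral_mul_sq_nonneg_of_dense hw (hcar.dense_toLp_ideal hmom
    (Ideal.mem_span_singleton_self s) fun y => (hs_pos y).ne') hnonneg (hφ.toLp _)).trans_eq
    (integral_congr_ae (hφ.coeFn_toLp.mono fun y hy => ?_))
  have := (hs_pos y).ne'
  by_cases hy' : y ∈ U
  · simp only [hy, Set.indicator_of_mem hy']
    field_simp
  · simp [hy, Set.indicator_of_notMem hy']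

theorem Carleman.eval_nonneg (hcar : Carleman ν) (hmom : momentsFinite ν)
    {g : MvPolynomial (Fin m) ℝ}
    (hg : ∀ h : MvPolynomial (Fin m) ℝ, 0 ≤ ∫ y, eval y h ^ 2 * eval y g ∂ν)
    {y₀ : Fin m → ℝ} (hy₀ : y₀ ∈ ν.support) : 0 ≤ eval y₀ g := by
  by_contra! hneg
  set U : Set (Fin m → ℝ) := {y | eval y g < 0}
  have hU : IsOpen U := isOpen_lt g.continuous_eval continuous_const
  have hpos : 0 < ∫ y in U, -eval y g ∂ν := by
    rw [setIntegral_pos_iff_support_of_nonneg_ae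
      ((ae_restrict_mem hU.measurableSet).mono fun y hy => neg_nonneg.2 (le_of_lt hy))
      (hmom.integrable g).neg.integrableOn]
    exact (Measure.mem_support_iff_forall _).1 hy₀ _ (Filter.mem_of_superset (hU.mem_nhds hneg)
      fun y hy => ⟨neg_ne_zero.2 (ne_of_lt hy), hy⟩)
  rw [integral_neg] at hpos
  linarith [hcar.setIntegral_eval_nonneg hmom hg hU.measurableSet]

lemma hasSupport.subset_support {Y : Set (Fin m → ℝ)} (hY : hasSupport ν Y) : Y ⊆ ν.support := by
  refine fun y hy => (Measure.mem_support_iff_forall y).2 fun V hV => ?_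
  obtain ⟨U, hUV, hU, hyU⟩ := mem_nhds_iff.1 hV
  exact (hY.2 U hU ⟨y, hyU, hy⟩).trans_le (measure_mono hUV)

end CarlemanDensity

section States

variable {E : Type*} [AddCommGroup E] [Module ℝ E] {P : PointedCone ℝ E} {e x : E}
  {L M : E →ₗ[ℝ] ℝ}

/-- `e` is an order unit of the cone `P`: it lies in `P`, and every vector enters `P` after adding
a multiple of `e`. -/
structure IsOrderUnit (P : PointedCone ℝ E) (e : E) : Prop where
  mem : e ∈ P
  exists_smul_add_mem (x : E) : ∃ c : ℝ, c • e + x ∈ P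

/-- `L` is a state of the cone `P`, normalized at `e`. Pure states are the extreme points of
`{L | IsState P e L}`. -/
structure IsState (P : PointedCone ℝ E) (e : E) (L : E →ₗ[ℝ] ℝ) : Prop where
  nonneg : ∀ x ∈ P, 0 ≤ L x
  map_unit : L e = 1

namespace IsOrderUnit

lemma eq_top_of_neg_mem (he : IsOrderUnit P e) (h : -e ∈ P) : P = ⊤ := by
  refine (Submodule.eq_top_iff').2 fun x => ?_
  obtain ⟨c, hx⟩ := he.exists_smul_add_mem x
  have hce : -(c • e) ∈ P := by
    obtain hc | hc := le_total 0 c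
    · simpa using P.smul_mem hc h
    · simpa using P.smul_mem (neg_nonneg.2 hc) he.mem
  simpa using P.add_mem hx hce

lemma eq_zero_of_map_eq_zero (he : IsOrderUnit P e) (hM : ∀ x ∈ P, 0 ≤ M x) (h : M e = 0) :
    M = 0 := by
  have hnonneg (x : E) : 0 ≤ M x := by
    obtain ⟨c, hx⟩ := he.exists_smul_add_mem x
    simpa [h] using hM _ hx
  ext x
  exact le_antisymm (by simpa using hnonneg (-x)) (hnonneg x)

lemma neg_notMem_sup_hull (he : IsOrderUnit P e) (hx : x ∉ P) :
    -e ∉ P ⊔ PointedCone.hull ℝ {-x} := by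
  intro h
  obtain ⟨y, hy, z, hz, hyz⟩ := Submodule.mem_sup.1 h
  obtain ⟨⟨t, ht⟩, rfl⟩ := Submodule.mem_span_singleton.1 hz
  have htx : t • x = y + e := by
    rw [← neg_neg e, ← hyz, Nonneg.mk_smul]
    module
  obtain rfl | ht := ht.eq_or_lt
  · have hey : -e = y := by simpa [eq_comm, add_eq_zero_iff_eq_neg] using htx
    exact hx (he.eq_top_of_neg_mem (hey ▸ hy) ▸ Submodule.mem_top)
  · refine hx ?_
    rw [← inv_smul_smul₀ ht.ne' x, htx]
    exact P.smul_mem (inv_nonneg.2 ht.le) (P.add_mem hy he.mem)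

lemma exists_isState (he : IsOrderUnit P e) (h : -e ∉ P) : ∃ L, IsState P e L := by
  have he0 : e ≠ 0 := by
    rintro rfl
    exact h (by simp)
  set ℓ : E →ₗ.[ℝ] ℝ := LinearPMap.mkSpanSingleton e 1 he0
  have hnonneg (z : ℓ.domain) (hz : (z : E) ∈ P) : 0 ≤ ℓ z := by
    obtain ⟨_, hze⟩ := z
    obtain ⟨c, rfl⟩ := Submodule.mem_span_singleton.1 hze
    rw [LinearPMap.mkSpanSingleton'_apply]
    by_contra! hc
    have hc : c < 0 := by simpa using hc
    refine h ?_
    convert P.smul_mem (inv_nonneg.2 (neg_nonneg.2 hc.le)) hz using 1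
    rw [smul_smul, inv_neg, neg_mul, inv_mul_cancel₀ hc.ne, neg_one_smul]
  obtain ⟨L, hLe, hLP⟩ := riesz_extension P ℓ hnonneg
    fun y => (he.exists_smul_add_mem y).elim fun c hy =>
      ⟨⟨c • e, Submodule.mem_span_singleton.2 ⟨c, rfl⟩⟩, hy⟩
  exact ⟨L, hLP, (hLe ⟨e, Submodule.mem_span_singleton_self e⟩).trans
    (LinearPMap.mkSpanSingleton'_apply_self _ _ _ _)⟩

lemma exists_isState_nonpos (he : IsOrderUnit P e) (hx : x ∉ P) : ∃ L, IsState P e L ∧ L x ≤ 0 := by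
  have hle : P ≤ P ⊔ PointedCone.hull ℝ {-x} := le_sup_left
  have he' : IsOrderUnit (P ⊔ PointedCone.hull ℝ {-x}) e :=
    ⟨hle he.mem, fun y => (he.exists_smul_add_mem y).imp fun _ hy => hle hy⟩
  obtain ⟨L, hL⟩ := he'.exists_isState (he.neg_notMem_sup_hull hx)
  have hLx := hL.nonneg (-x) (Submodule.mem_sup_right (Submodule.mem_span_singleton_self _))
  exact ⟨L, ⟨fun y hy => hL.nonneg y (hle hy), hL.map_unit⟩, by simpa using hLx⟩

lemma isCompact_image_coe_setOf_isState (he : IsOrderUnit P e) :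
    IsCompact ((fun (L : E →ₗ[ℝ] ℝ) (x : E) => L x) '' {L | IsState P e L}) := by
  choose c hc using he.exists_smul_add_mem
  refine (isCompact_univ_pi fun x => isCompact_Icc (a := -c x) (b := c (-x))).of_isClosed_subset
    ?_ ?_
  · have : (fun (L : E →ₗ[ℝ] ℝ) (x : E) => L x) '' {L | IsState P e L} =
        Set.range (fun (L : E →ₗ[ℝ] ℝ) (x : E) => L x) ∩
          ((⋂ x ∈ P, {g | 0 ≤ g x}) ∩ {g | g e = 1}) := by
      ext g
      constructor
      · rintro ⟨L, hL, rfl⟩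
        exact ⟨⟨L, rfl⟩, Set.mem_iInter₂.2 hL.nonneg, hL.map_unit⟩
      · rintro ⟨⟨L, rfl⟩, hnonneg, hunit⟩
        exact ⟨L, ⟨Set.mem_iInter₂.1 hnonneg, hunit⟩, rfl⟩
    rw [this]
    exact (LinearMap.isClosed_range_coe E ℝ (RingHom.id ℝ)).inter <|
      (isClosed_biInter fun x _ => isClosed_le continuous_const (continuous_apply x)).inter
        (isClosed_eq (continuous_apply e) continuous_const)
  · rintro _ ⟨L, hL, rfl⟩ x -
    have hx := hL.nonneg _ (hc x)
    have hnx := hL.nonneg _ (hc (-x))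
    simp only [map_add, map_smul, map_neg, hL.map_unit, smul_eq_mul, mul_one] at hx hnx
    exact ⟨by linarith, by linarith⟩

theorem exists_mem_extremePoints_nonpos (he : IsOrderUnit P e) (hx : x ∉ P) :
    ∃ L ∈ Set.extremePoints ℝ {L | IsState P e L}, L x ≤ 0 := by
  set K := (fun (L : E →ₗ[ℝ] ℝ) (x : E) => L x) '' {L | IsState P e L}
  have hK : IsCompact K := he.isCompact_image_coe_setOf_isState
  obtain ⟨L₀, hL₀, hL₀x⟩ := he.exists_isState_nonpos hx
  let eval_neg_x : StrongDual ℝ (E → ℝ) := -ContinuousLinearMap.proj x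
  have hexp : IsExposed ℝ K {g ∈ K | ∀ g' ∈ K, eval_neg_x g' ≤ eval_neg_x g} := fun _ => ⟨_, rfl⟩
  obtain ⟨g, hg, hgmax⟩ := hK.exists_isMaxOn ⟨_, L₀, hL₀, rfl⟩ eval_neg_x.continuous.continuousOn
  obtain ⟨g, hgext⟩ := (hexp.isCompact hK).extremePoints_nonempty ⟨g, hg, hgmax⟩
  obtain ⟨⟨L, hL, rfl⟩, hmin⟩ := hgext.1
  have hLx : -L₀ x ≤ -L x := hmin _ ⟨L₀, hL₀, rfl⟩
  refine ⟨L, mem_extremePoints_iff_left.2 ⟨hL, fun L₁ hL₁ L₂ hL₂ hseg => ?_⟩, by linarith⟩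
  have hKext := hexp.isExtreme.extremePoints_subset_extremePoints hgext
  refine DFunLike.coe_injective <|
    (mem_extremePoints_iff_left.1 hKext).2 _ ⟨L₁, hL₁, rfl⟩ _ ⟨L₂, hL₂, rfl⟩ ?_
  obtain ⟨a, b, ha, hb, hab, rfl⟩ := hseg
  exact ⟨a, b, ha, hb, hab, rfl⟩

lemma eq_smul_of_le (he : IsOrderUnit P e) (hL : L ∈ Set.extremePoints ℝ {L | IsState P e L})
    (hM : ∀ x ∈ P, 0 ≤ M x) (hML : ∀ x ∈ P, M x ≤ L x) : M = M e • L := by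
  have hLM : ∀ x ∈ P, 0 ≤ (L - M) x := fun x hx => sub_nonneg.2 (hML x hx)
  have hunit : (L - M) e = 1 - M e := by rw [LinearMap.sub_apply, hL.1.map_unit]
  obtain h0 | h0 := (hM e he.mem).eq_or_lt
  · rw [← h0, zero_smul, he.eq_zero_of_map_eq_zero hM h0.symm]
  obtain h1 | h1 := (hLM e he.mem).eq_or_lt
  · have hML' : L - M = 0 := he.eq_zero_of_map_eq_zero hLM h1.symm
    rw [← sub_eq_zero.1 hML', hL.1.map_unit, one_smul]
  have normalized {N : E →ₗ[ℝ] ℝ} (hN : ∀ x ∈ P, 0 ≤ N x) (hNe : 0 < N e) :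
      IsState P e ((N e)⁻¹ • N) :=
    ⟨fun x hx => mul_nonneg (inv_nonneg.2 hNe.le) (hN x hx), inv_mul_cancel₀ hNe.ne'⟩
  have hseg : L ∈ openSegment ℝ ((M e)⁻¹ • M) (((L - M) e)⁻¹ • (L - M)) :=
    ⟨M e, (L - M) e, h0, h1, by rw [hunit, add_sub_cancel],
      by rw [smul_inv_smul₀ h0.ne', smul_inv_smul₀ h1.ne', add_sub_cancel]⟩
  rw [← inv_smul_eq_iff₀ h0.ne']
  exact (mem_extremePoints_iff_left.1 hL).2 _ (normalized hM h0) _ (normalized hLM h1) hseg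

lemma eq_smul_of_abs_le (he : IsOrderUnit P e) (hL : L ∈ Set.extremePoints ℝ {L | IsState P e L})
    {r : ℝ} (hM : ∀ x ∈ P, |M x| ≤ r * L x) : M = M e • L := by
  have hr : 0 ≤ r := by simpa [hL.1.map_unit] using (abs_nonneg _).trans (hM e he.mem)
  set s : ℝ := (r + 1)⁻¹
  have hs : 0 < s := by positivity
  have hsM : ∀ x ∈ P, |s * M x| ≤ L x := fun x hx => by
    rw [abs_mul, abs_of_pos hs, inv_mul_le_iff₀ (by positivity)]
    linarith [hM x hx, hL.1.nonneg x hx]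
  have hle := he.eq_smul_of_le hL (M := (2⁻¹ : ℝ) • (L + s • M))
    (fun x hx => by
      simp only [LinearMap.smul_apply, LinearMap.add_apply, smul_eq_mul]
      linarith [neg_le_of_abs_le (hsM x hx)])
    (fun x hx => by
      simp only [LinearMap.smul_apply, LinearMap.add_apply, smul_eq_mul]
      linarith [le_of_abs_le (hsM x hx)])
  ext x
  have := DFunLike.congr_fun hle x
  simp only [LinearMap.smul_apply, LinearMap.add_apply, smul_eq_mul, hL.1.map_unit] at this ⊢
  exact mul_left_cancel₀ hs.ne' (by linarith)

end IsOrderUnit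

end States

section ModuleStates

variable {A E : Type*} [CommRing A] [Algebra ℝ A] [AddCommGroup E] [Module ℝ E] [Module A E]
  [IsScalarTower ℝ A E] {P : PointedCone ℝ E} {e x : E} {L : E →ₗ[ℝ] ℝ}

lemma sq_map_mul_smul_le (hL : ∀ f : A, 0 ≤ L (f ^ 2 • x)) (f g : A) :
    L ((f * g) • x) ^ 2 ≤ L (f ^ 2 • x) * L (g ^ 2 • x) := by
  let B : LinearMap.BilinForm ℝ A :=
    (LinearMap.mul ℝ A).compr₂ (L ∘ₗ (LinearMap.toSpanSingleton A E x).restrictScalars ℝ)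
  have hB (a b : A) : B a b = L ((a * b) • x) := rfl
  have := B.apply_mul_apply_le_of_forall_zero_le (fun a => by simpa [hB, sq] using hL a) f g
  simpa only [hB, mul_comm g f, ← sq] using this

lemma le_mul_of_sq_le_mul_of_le_mul_pow {b : ℕ → ℝ} {c D : ℝ} (hc : 0 ≤ c) (hb : ∀ k, 0 ≤ b k)
    (hconv : ∀ k, b (k + 1) ^ 2 ≤ b k * b (k + 2)) (hD : ∀ k, b k ≤ D * c ^ k) :
    b 1 ≤ c * b 0 := by
  by_contra! h
  have h1 : 0 < b 1 := (mul_nonneg hc (hb 0)).trans_lt h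
  have h0 : 0 < b 0 := (hb 0).lt_of_ne fun h0 => by
    have := hconv 0
    rw [← h0, zero_mul] at this
    exact (pow_pos h1 2).not_ge this
  set ρ := b 1 / b 0
  have hρ : 0 < ρ := div_pos h1 h0
  have hρc : c < ρ := (lt_div_iff₀ h0).2 h
  have hgrowth (k : ℕ) : 0 < b k ∧ ρ * b k ≤ b (k + 1) := by
    induction k with
    | zero => exact ⟨h0, (div_mul_cancel₀ _ h0.ne').le⟩
    | succ k ih =>
      obtain ⟨hk, hk'⟩ := ih
      refine ⟨(mul_pos hρ hk).trans_le hk', le_of_mul_le_mul_left ?_ hk⟩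
      calc b k * (ρ * b (k + 1)) = ρ * b k * b (k + 1) := by ring
        _ ≤ b (k + 1) * b (k + 1) := by gcongr; exact hb _
        _ ≤ b k * b (k + 1 + 1) := by simpa [sq] using hconv k
  have hgeom (k : ℕ) : ρ ^ k * b 0 ≤ b k := by
    induction k with
    | zero => simp
    | succ k ih =>
      calc ρ ^ (k + 1) * b 0 = ρ * (ρ ^ k * b 0) := by ring
        _ ≤ ρ * b k := by gcongr
        _ ≤ b (k + 1) := (hgrowth k).2
  have hlim : Filter.Tendsto (fun k => D * (c / ρ) ^ k) Filter.atTop (nhds 0) := by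
    simpa using (tendsto_pow_atTop_nhds_zero_of_lt_one (by positivity)
      ((div_lt_one hρ).2 hρc)).const_mul D
  refine h0.not_ge (ge_of_tendsto' hlim fun k => ?_)
  rw [div_pow, ← mul_div_assoc, le_div_iff₀ (by positivity), mul_comm]
  exact (hgeom k).trans (hD k)

lemma abs_map_smul_le_of_map_pow_smul_le (hL : ∀ f : A, 0 ≤ L (f ^ 2 • x)) {f : A} {c D : ℝ}
    (hc : 0 ≤ c) (hD : ∀ k : ℕ, L ((f ^ k) ^ 2 • x) ≤ D * c ^ k) :
    |L (f • x)| ≤ √c * L x := by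
  have hx : 0 ≤ L x := by simpa using hL 1
  have hsq : L (f ^ 2 • x) ≤ c * L x := by
    have := le_mul_of_sq_le_mul_of_le_mul_pow hc (fun k => hL (f ^ k)) (fun k => ?_) hD
    · simpa using this
    · convert sq_map_mul_smul_le hL (f ^ k) (f ^ (k + 2)) using 4
      ring
  rw [← Real.sqrt_sq hx, ← Real.sqrt_mul hc]
  refine Real.abs_le_sqrt ?_
  calc L (f • x) ^ 2 ≤ L (f ^ 2 • x) * L x := by simpa using sq_map_mul_smul_le hL f 1
    _ ≤ c * L x * L x := by gcongr
    _ = c * L x ^ 2 := by ring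

theorem IsOrderUnit.exists_algHom_map_smul (he : IsOrderUnit P e)
    (hL : L ∈ Set.extremePoints ℝ {L | IsState P e L})
    (hbdd : ∀ f : A, ∃ r, ∀ x ∈ P, |L (f • x)| ≤ r * L x) :
    ∃ χ : A →ₐ[ℝ] ℝ, ∀ f x, L (f • x) = χ f * L x := by
  have hmul (f : A) (x : E) : L (f • x) = L (f • e) * L x := by
    obtain ⟨r, hr⟩ := hbdd f
    exact DFunLike.congr_fun (he.eq_smul_of_abs_le hL (M := L ∘ₗ Algebra.lsmul ℝ ℝ E f) hr) x
  refine ⟨AlgHom.ofLinearMap (L ∘ₗ (LinearMap.toSpanSingleton A E e).restrictScalars ℝ) ?_ ?_, hmul⟩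
  · simpa using hL.1.map_unit
  · intro f g
    simpa [mul_smul] using hmul f (g • e)

end ModuleStates

section MatrixQuadModule

lemma sq_smul_transpose_mul_self {R κ ι : Type*} [CommSemiring R] [Fintype κ] (f : R)
    (T : Matrix κ ι R) : f ^ 2 • (Tᵀ * T) = (f • T)ᵀ * (f • T) := by
  rw [transpose_smul, Matrix.smul_mul, Matrix.mul_smul, smul_smul, sq]

lemma map_eq_map_map_algHom {A ι : Type*} [Semiring A] [Algebra ℝ A] [Finite ι]
    {L : Matrix ι ι A →ₗ[ℝ] ℝ} {χ : A →ₐ[ℝ] ℝ} (hχ : ∀ (f : A) H, L (f • H) = χ f * L H)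
    (H : Matrix ι ι A) : L H = L ((H.map χ).map (algebraMap ℝ A)) := by
  classical
  have := Fintype.ofFinite ι
  have hsum (K : Matrix ι ι A) : L K = ∑ i, ∑ j, χ (K i j) * L (single i j 1) := by
    conv_lhs => rw [matrix_eq_sum_single K]
    simp_rw [map_sum, ← hχ, smul_single, smul_eq_mul, mul_one]
  rw [hsum H, hsum]
  simp

variable {A ι : Type*} [CommRing A] [Algebra ℝ A] [Fintype ι]

/-- A matrix quadratic module over `A`: a cone of matrices that contains the Hermitian squares
`Tᵀ * T` and is closed under multiplication by squares of scalars. Skew-symmetric matrices are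
included, so that membership depends only on the symmetric part of a matrix. -/
structure IsMatrixQuadModule (P : PointedCone ℝ (Matrix ι ι A)) : Prop where
  transpose_mul_self_mem (T : Matrix ι ι A) : Tᵀ * T ∈ P
  sq_smul_mem (f : A) {H : Matrix ι ι A} (hH : H ∈ P) : f ^ 2 • H ∈ P
  skew_mem {H : Matrix ι ι A} (hH : Hᵀ = -H) : H ∈ P

lemma exists_eq_skew_add_sub (H : Matrix ι ι A) :
    ∃ K U V : Matrix ι ι A, Kᵀ = -K ∧ H = K + (Uᵀ * U - Vᵀ * V) := by
  classical
  set S : Matrix ι ι A := (2⁻¹ : ℝ) • (H + Hᵀ)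
  have hS : Sᵀ = S := by simp [S, add_comm]
  refine ⟨(2⁻¹ : ℝ) • (H - Hᵀ), (2⁻¹ : ℝ) • (1 + S), (2⁻¹ : ℝ) • (1 - S), ?_, ?_⟩
  · rw [transpose_smul, transpose_sub, transpose_transpose, ← smul_neg, neg_sub]
  · simp only [transpose_smul, transpose_add, transpose_sub, transpose_one, hS,
      smul_mul_smul_comm, mul_add, add_mul, mul_sub, sub_mul, one_mul, mul_one]
    simp only [S]
    module

open scoped MatrixOrder Matrix.Norms.L2Operator in
lemma exists_isUnit_transpose_mul_self [DecidableEq ι] {B : Matrix ι ι ℝ} (hB : B.PosDef) :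
    ∃ S : Matrix ι ι ℝ, IsUnit S ∧ B = Sᵀ * S := by
  obtain ⟨S, hS, rfl⟩ :=
    CStarAlgebra.isStrictlyPositive_iff_eq_star_mul_self.1 hB.isStrictlyPositive
  exact ⟨S, hS, by simp [star_eq_conjTranspose]⟩

variable {P : PointedCone ℝ (Matrix ι ι A)} {L : Matrix ι ι A →ₗ[ℝ] ℝ}

lemma map_pow_smul_transpose_mul_self_le (hL : ∀ H ∈ P, 0 ≤ L H) {f : A} {c : ℝ}
    (hc : 0 ≤ c) (hf : ∀ T : Matrix ι ι A, (algebraMap ℝ A c - f ^ 2) • (Tᵀ * T) ∈ P)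
    (U : Matrix ι ι A) (k : ℕ) : L ((f ^ k) ^ 2 • (Uᵀ * U)) ≤ L (Uᵀ * U) * c ^ k := by
  induction k with
  | zero => simp
  | succ k ih =>
    have h := hL _ (hf (f ^ k • U))
    rw [← sq_smul_transpose_mul_self, sub_smul, algebraMap_smul, smul_smul, ← mul_pow, ← pow_succ',
      map_sub, map_smul, smul_eq_mul, sub_nonneg] at h
    calc L ((f ^ (k + 1)) ^ 2 • (Uᵀ * U)) ≤ c * L ((f ^ k) ^ 2 • (Uᵀ * U)) := h
      _ ≤ c * (L (Uᵀ * U) * c ^ k) := by gcongr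
      _ = L (Uᵀ * U) * c ^ (k + 1) := by ring

namespace IsMatrixQuadModule

/-- The elements `f` whose square is bounded by a constant `c`, in the sense that `P` contains the
multiples of all Hermitian squares by `c - f ^ 2`. -/
noncomputable def boundedSubalgebra (hP : IsMatrixQuadModule P) : Subalgebra ℝ A where
  carrier := {f | ∃ c : ℝ, 0 ≤ c ∧ ∀ T : Matrix ι ι A, (algebraMap ℝ A c - f ^ 2) • (Tᵀ * T) ∈ P}
  algebraMap_mem' a := ⟨a ^ 2, sq_nonneg a, fun T => by simp⟩
  add_mem' := by
    rintro f g ⟨a, ha, hf⟩ ⟨b, hb, hg⟩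
    refine ⟨2 * (a + b), by positivity, fun T => ?_⟩
    convert P.add_mem (P.smul_mem zero_le_two (P.add_mem (hf T) (hg T)))
      (hP.sq_smul_mem (f - g) (hP.transpose_mul_self_mem T)) using 1
    simp only [← add_smul, ← algebraMap_smul A (2 : ℝ), smul_smul, map_mul, map_add]
    congr 1
    simp only [map_ofNat]
    ring
  mul_mem' := by
    rintro f g ⟨a, ha, hf⟩ ⟨b, hb, hg⟩
    refine ⟨a * b, mul_nonneg ha hb, fun T => ?_⟩
    convert P.add_mem (hf (g • T)) (P.smul_mem ha (hg T)) using 1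
    rw [← sq_smul_transpose_mul_self, ← algebraMap_smul A a, smul_smul, smul_smul, ← add_smul,
      map_mul]
    congr 1
    ring

lemma mem_boundedSubalgebra_of_sum (hP : IsMatrixQuadModule P) {κ : Type*} {s : Finset κ}
    {f : κ → A} {c : ℝ} (hc : 0 ≤ c)
    (h : ∀ T : Matrix ι ι A, (algebraMap ℝ A c - ∑ k ∈ s, f k ^ 2) • (Tᵀ * T) ∈ P)
    {k : κ} (hk : k ∈ s) : f k ∈ hP.boundedSubalgebra := by
  classical
  refine ⟨c, hc, fun T => ?_⟩
  have hsum : ∑ l ∈ s.erase k, f l ^ 2 • (Tᵀ * T) ∈ P :=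
    P.sum_mem fun l _ => hP.sq_smul_mem (f l) (hP.transpose_mul_self_mem T)
  convert P.add_mem (h T) hsum using 1
  rw [← sum_smul, ← add_smul, ← add_sum_erase s _ hk, sub_add_eq_sub_sub, sub_add_cancel]

lemma boundedSubalgebra_eq_top_of_sum_X {σ : Type*} [Fintype σ]
    {P : PointedCone ℝ (Matrix ι ι (MvPolynomial σ ℝ))} (hP : IsMatrixQuadModule P) {c : ℝ}
    (hc : 0 ≤ c)
    (h : ∀ T : Matrix ι ι (MvPolynomial σ ℝ),
      (MvPolynomial.C c - ∑ i, (X i : MvPolynomial σ ℝ) ^ 2) • (Tᵀ * T) ∈ P) :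
    hP.boundedSubalgebra = ⊤ := by
  rw [eq_top_iff, ← MvPolynomial.adjoin_range_X, Algebra.adjoin_le_iff]
  rintro _ ⟨i, rfl⟩
  exact hP.mem_boundedSubalgebra_of_sum hc h (mem_univ i)

lemma exists_smul_one_sub_transpose_mul_self_mem [DecidableEq ι] (hP : IsMatrixQuadModule P)
    (hbdd : hP.boundedSubalgebra = ⊤) (U : Matrix ι ι A) : ∃ c : ℝ, c • 1 - Uᵀ * U ∈ P := by
  induction U using Matrix.induction_on' with
  | h_zero => exact ⟨0, by simp⟩
  | h_add U V hU hV =>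
    obtain ⟨a, hU⟩ := hU
    obtain ⟨b, hV⟩ := hV
    refine ⟨2 * (a + b), ?_⟩
    convert P.add_mem (P.smul_mem zero_le_two (P.add_mem hU hV))
      (hP.transpose_mul_self_mem (U - V)) using 1
    simp only [transpose_add, transpose_sub, mul_add, add_mul, mul_sub, sub_mul]
    module
  | h_std_basis i j f =>
    obtain ⟨c, hc, hf⟩ : f ∈ hP.boundedSubalgebra := hbdd ▸ Algebra.mem_top
    set E : Matrix ι ι A := single j j 1
    have hE : E * E = E := by simp [E]
    have hEt : Eᵀ = E := by simp [E]
    have hsingle : (single i j f)ᵀ * single i j f = f ^ 2 • E := by simp [E, sq]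
    refine ⟨c, ?_⟩
    convert P.add_mem (hf E) (P.smul_mem hc (hP.transpose_mul_self_mem (1 - E))) using 1
    simp only [hsingle, transpose_sub, transpose_one, hEt, hE, mul_sub, sub_mul, one_mul, mul_one,
      sub_smul, algebraMap_smul]
    module

lemma isOrderUnit [DecidableEq ι] (hP : IsMatrixQuadModule P) (hbdd : hP.boundedSubalgebra = ⊤) :
    IsOrderUnit P 1 where
  mem := by simpa using hP.transpose_mul_self_mem 1
  exists_smul_add_mem H := by
    obtain ⟨K, U, V, hK, rfl⟩ := exists_eq_skew_add_sub H
    obtain ⟨c, hV⟩ := hP.exists_smul_one_sub_transpose_mul_self_mem hbdd V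
    refine ⟨c, ?_⟩
    convert P.add_mem (P.add_mem (hP.skew_mem hK) (hP.transpose_mul_self_mem U)) hV using 1
    module

lemma map_skew (hP : IsMatrixQuadModule P) (hL : ∀ H ∈ P, 0 ≤ L H) {K : Matrix ι ι A}
    (hK : Kᵀ = -K) : L K = 0 := by
  have hneg := hL (-K) (hP.skew_mem (by rw [transpose_neg, hK]))
  rw [map_neg] at hneg
  exact le_antisymm (neg_nonneg.1 hneg) (hL K (hP.skew_mem hK))

lemma exists_abs_map_smul_le (hP : IsMatrixQuadModule P) (hbdd : hP.boundedSubalgebra = ⊤)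
    (hL : ∀ H ∈ P, 0 ≤ L H) (f : A) :
    ∃ r : ℝ, ∀ H ∈ P, |L (f • H)| ≤ r * L H := by
  obtain ⟨c, hc, hf⟩ : f ∈ hP.boundedSubalgebra := hbdd ▸ Algebra.mem_top
  refine ⟨√c, fun H hH => ?_⟩
  obtain ⟨K, U, V, hK, hH_eq⟩ := exists_eq_skew_add_sub H
  refine abs_map_smul_le_of_map_pow_smul_le (D := L (Uᵀ * U))
    (fun g => hL _ (hP.sq_smul_mem g hH)) hc fun k => ?_
  have hskew : L ((f ^ k) ^ 2 • K) = 0 := hP.map_skew hL (by rw [transpose_smul, hK, smul_neg])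
  have hV : 0 ≤ L ((f ^ k) ^ 2 • (Vᵀ * V)) :=
    hL _ (hP.sq_smul_mem _ (hP.transpose_mul_self_mem V))
  rw [hH_eq, smul_add, smul_sub, map_add, map_sub, hskew]
  linarith [map_pow_smul_transpose_mul_self_le hL hc hf U k]

lemma map_transpose_mul_self_pos [DecidableEq ι] (hP : IsMatrixQuadModule P) (hL : IsState P 1 L)
    {S : Matrix ι ι A} (hS : IsUnit S) : 0 < L (Sᵀ * S) := by
  let B : LinearMap.BilinForm ℝ (Matrix ι ι A) :=
    (LinearMap.mul ℝ (Matrix ι ι A)).compl₁₂ (transposeLinearEquiv ι ι ℝ A).toLinearMap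
      LinearMap.id |>.compr₂ L
  have hnonneg (T : Matrix ι ι A) : 0 ≤ B T T := hL.nonneg _ (hP.transpose_mul_self_mem T)
  obtain ⟨R, hR⟩ := hS.exists_right_inv
  have hSR : B S Rᵀ * B Rᵀ S = 1 := by
    have hRS : R * S = 1 := mul_eq_one_comm.1 hR
    simp [B, ← transpose_mul, hRS, hL.map_unit]
  have := B.apply_mul_apply_le_of_forall_zero_le hnonneg S Rᵀ
  rw [hSR] at this
  exact pos_of_mul_pos_left (zero_lt_one.trans_le this) (hnonneg Rᵀ)

lemma map_map_algebraMap_pos_of_posDef [DecidableEq ι] (hP : IsMatrixQuadModule P)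
    (hL : IsState P 1 L) {B : Matrix ι ι ℝ} (hB : B.PosDef) : 0 < L (B.map (algebraMap ℝ A)) := by
  obtain ⟨S, hS, rfl⟩ := exists_isUnit_transpose_mul_self hB
  rw [Matrix.map_mul, transpose_map]
  exact hP.map_transpose_mul_self_pos hL (hS.map (algebraMap ℝ A).mapMatrix)

theorem mem_of_forall_posDef [DecidableEq ι] (hP : IsMatrixQuadModule P)
    (hbdd : hP.boundedSubalgebra = ⊤) {F : Matrix ι ι A}
    (hF : ∀ χ : A →ₐ[ℝ] ℝ, (∀ f : A, f • 1 ∈ P → 0 ≤ χ f) → (F.map χ).PosDef) : F ∈ P := by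
  by_contra hFP
  have hone := hP.isOrderUnit hbdd
  obtain ⟨L, hL, hLF⟩ := hone.exists_mem_extremePoints_nonpos hFP
  obtain ⟨χ, hχ⟩ := hone.exists_algHom_map_smul hL (hP.exists_abs_map_smul_le hbdd hL.1.nonneg)
  have hχ_nonneg (f : A) (hf : f • 1 ∈ P) : 0 ≤ χ f := by
    simpa [hχ, hL.1.map_unit] using hL.1.nonneg _ hf
  refine (hP.map_map_algebraMap_pos_of_posDef hL.1 (hF χ hχ_nonneg)).not_ge ?_
  rwa [← map_eq_map_map_algHom hχ]

end IsMatrixQuadModule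

end MatrixQuadModule

section IntegrateOut

variable {n m : ℕ} {ν : Measure (Fin m → ℝ)}

/-- The partial integration `integY` as a linear map. -/
noncomputable def integYLinear (n : ℕ) {m : ℕ} (ν : Measure (Fin m → ℝ)) :
    MvPolynomial (Fin n ⊕ Fin m) ℝ →ₗ[ℝ] MvPolynomial (Fin n) ℝ :=
  (basisMonomials (Fin n ⊕ Fin m) ℝ).constr ℝ fun d =>
    monomial (xPart d) (∫ y, ∏ j : Fin m, y j ^ d (Sum.inr j) ∂ν)

lemma integYLinear_monomial (d : (Fin n ⊕ Fin m) →₀ ℕ) (c : ℝ) :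
    integYLinear n ν (monomial d c) =
      monomial (xPart d) (c * ∫ y, ∏ j : Fin m, y j ^ d (Sum.inr j) ∂ν) := by
  have h : monomial d c = c • basisMonomials (Fin n ⊕ Fin m) ℝ d := by simp [smul_monomial]
  rw [h, map_smul, integYLinear, Module.Basis.constr_basis, smul_monomial, smul_eq_mul]

lemma coe_integYLinear : ⇑(integYLinear n ν) = integY ν := by
  ext1 q
  conv_lhs => rw [← support_sum_monomial_coeff q, map_sum]
  exact sum_congr rfl fun d _ => integYLinear_monomial d _

lemma integYLinear_rename_mul (f : MvPolynomial (Fin n) ℝ) (q : MvPolynomial (Fin n ⊕ Fin m) ℝ) :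
    integYLinear n ν (rename Sum.inl f * q) = f * integYLinear n ν q := by
  induction f using MvPolynomial.induction_on' with
  | add f g hf hg => rw [map_add, add_mul, map_add, hf, hg, add_mul]
  | monomial d a =>
    induction q using MvPolynomial.induction_on' with
    | add q r hq hr => rw [mul_add, map_add, hq, hr, map_add, mul_add]
    | monomial e b =>
      have hx : xPart (d.mapDomain Sum.inl + e) = d + xPart e := by
        ext i
        simp [xPart, Finsupp.mapDomain_apply Sum.inl_injective]
      have hy (j : Fin m) : (d.mapDomain Sum.inl + e : (Fin n ⊕ Fin m) →₀ ℕ) (Sum.inr j) =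
          e (Sum.inr j) := by
        simp [Finsupp.mapDomain_of_notMem_range]
      simp only [rename_monomial, monomial_mul, integYLinear_monomial, hx, hy, mul_assoc]

/-- Substitution of the point `a` for the `x`-variables. -/
noncomputable def substX (a : Fin n → ℝ) :
    MvPolynomial (Fin n ⊕ Fin m) ℝ →ₐ[ℝ] MvPolynomial (Fin m) ℝ :=
  aeval (Sum.elim (fun i => MvPolynomial.C (a i)) X)

lemma eval_substX (a : Fin n → ℝ) (y : Fin m → ℝ) (q : MvPolynomial (Fin n ⊕ Fin m) ℝ) :
    eval y (substX a q) = eval (Sum.elim a y) q := by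
  induction q using MvPolynomial.induction_on with
  | C c => simp [substX]
  | add q r hq hr => simp only [map_add, hq, hr]
  | mul_X q i hq =>
    rw [map_mul, map_mul, map_mul, hq]
    cases i <;> simp [substX]

lemma momentsFinite.eval_integYLinear (hmom : momentsFinite ν) (a : Fin n → ℝ)
    (q : MvPolynomial (Fin n ⊕ Fin m) ℝ) :
    eval a (integYLinear n ν q) = ∫ y, eval (Sum.elim a y) q ∂ν := by
  have hint (r : MvPolynomial (Fin n ⊕ Fin m) ℝ) :
      Integrable (fun y => eval (Sum.elim a y) r) ν := by
    simpa only [eval_substX] using hmom.integrable (substX a r)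
  induction q using MvPolynomial.induction_on' with
  | add q r hq hr =>
    simp only [map_add, hq, hr]
    exact (integral_add (hint q) (hint r)).symm
  | monomial d c =>
    rw [integYLinear_monomial, eval_monomial, Finsupp.prod_fintype _ _ (by simp)]
    simp_rw [eval_monomial, Finsupp.prod_fintype d _ fun _ => pow_zero _, Fintype.prod_sum_type,
      Sum.elim_inl, Sum.elim_inr, integral_const_mul, xPart, Finsupp.comapDomain_apply]
    ring

end IntegrateOut

section SOSMatrix

open scoped Kronecker

variable {σ ι κ : Type*} [Fintype ι] [Fintype κ] {M N : Matrix ι ι (MvPolynomial σ ℝ)}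

lemma IsSOSMatrix.transpose_mul_self (T : Matrix κ ι (MvPolynomial σ ℝ)) :
    IsSOSMatrix (Tᵀ * T) := by
  refine ⟨Fintype.card κ, T.submatrix (Fintype.equivFin κ).symm id, ?_⟩
  rw [transpose_submatrix, submatrix_mul_equiv, submatrix_id_id]

lemma IsSOSMatrix.zero : IsSOSMatrix (0 : Matrix ι ι (MvPolynomial σ ℝ)) := ⟨0, 0, by simp⟩

lemma IsSOSMatrix.isSymm (hM : IsSOSMatrix M) : M.IsSymm := by
  obtain ⟨k, T, rfl⟩ := hM
  rw [IsSymm, transpose_mul, transpose_transpose]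

lemma IsSOSMatrix.add (hM : IsSOSMatrix M) (hN : IsSOSMatrix N) : IsSOSMatrix (M + N) := by
  obtain ⟨k, T, rfl⟩ := hM
  obtain ⟨l, U, rfl⟩ := hN
  rw [← fromCols_mul_fromRows, ← transpose_fromRows]
  exact .transpose_mul_self _

lemma IsSOSMatrix.sq_smul (hM : IsSOSMatrix M) (f : MvPolynomial σ ℝ) :
    IsSOSMatrix (f ^ 2 • M) := by
  obtain ⟨k, T, rfl⟩ := hM
  exact ⟨k, f • T, sq_smul_transpose_mul_self f T⟩

lemma IsSOSMatrix.smul (hM : IsSOSMatrix M) {c : ℝ} (hc : 0 ≤ c) : IsSOSMatrix (c • M) := by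
  convert hM.sq_smul (algebraMap ℝ _ √c)
  rw [← map_pow, Real.sq_sqrt hc, algebraMap_smul]

lemma IsSOSMatrix.map_rename {τ : Type*} (hM : IsSOSMatrix M) (f : σ → τ) :
    IsSOSMatrix (M.map (rename f)) := by
  obtain ⟨k, T, rfl⟩ := hM
  exact ⟨k, T.map (rename f), by rw [Matrix.map_mul, transpose_map]⟩

lemma IsSOSMatrix.kronecker (hM : IsSOSMatrix M) {K : Matrix κ κ (MvPolynomial σ ℝ)}
    (hK : IsSOSMatrix K) : IsSOSMatrix (M ⊗ₖ K) := by
  obtain ⟨k, T, rfl⟩ := hM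
  obtain ⟨l, U, rfl⟩ := hK
  rw [mul_kronecker_mul, kroneckerMap_transpose]
  exact .transpose_mul_self _

end SOSMatrix

section BlockTrace

open scoped Kronecker

variable {R ι κ : Type*} [CommSemiring R] [Fintype κ]

lemma lram_add (A B : Matrix (ι × κ) (ι × κ) R) (G : Matrix κ κ R) :
    lram (A + B) G = lram A G + lram B G := by
  ext
  simp [lram, add_mul, sum_add_distrib]

lemma lram_smul {S : Type*} [Monoid S] [DistribMulAction S R] [IsScalarTower S R R] (s : S)
    (A : Matrix (ι × κ) (ι × κ) R) (G : Matrix κ κ R) : lram (s • A) G = s • lram A G := by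
  ext
  simp [lram, smul_sum, smul_mul_assoc]

lemma lram_kronecker (A : Matrix ι ι R) (B G : Matrix κ κ R) :
    lram (A ⊗ₖ B) G = trace (Bᵀ * G) • Aᵀ := by
  ext i j
  simp only [lram, trace, of_apply, kroneckerMap_apply, diag_apply, Matrix.mul_apply,
    transpose_apply, Matrix.smul_apply, smul_eq_mul, sum_mul]
  exact sum_congr rfl fun a _ => sum_congr rfl fun c _ => by ring

end BlockTrace

section QuantifiedModule

open scoped Kronecker

variable {n m : ℕ} {ι κ : Type*} [Fintype ι] [Fintype κ] {ν : Measure (Fin m → ℝ)}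
  {G : Matrix κ κ (MvPolynomial (Fin n ⊕ Fin m) ℝ)}

/-- The quadratic module `Q^ι(G, ν)`. -/
noncomputable def matQuadModule (ι : Type*) [Fintype ι] (ν : Measure (Fin m → ℝ))
    (G : Matrix κ κ (MvPolynomial (Fin n ⊕ Fin m) ℝ)) :
    PointedCone ℝ (Matrix ι ι (MvPolynomial (Fin n) ℝ)) where
  carrier := {H | ∃ (S0 : Matrix ι ι (MvPolynomial (Fin n) ℝ))
    (Sg : Matrix (ι × κ) (ι × κ) (MvPolynomial (Fin n ⊕ Fin m) ℝ)),
    IsSOSMatrix S0 ∧ IsSOSMatrix Sg ∧ H = S0 + (lram Sg G).map (integY ν)}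
  zero_mem' := ⟨0, 0, .zero, .zero, by ext1; simp [lram, integY]⟩
  add_mem' := by
    rintro _ _ ⟨S, T, hS, hT, rfl⟩ ⟨S', T', hS', hT', rfl⟩
    refine ⟨S + S', T + T', hS.add hS', hT.add hT', ?_⟩
    rw [← coe_integYLinear, lram_add, Matrix.map_add _ (map_add _), add_add_add_comm]
  smul_mem' := by
    rintro ⟨c, hc⟩ _ ⟨S, T, hS, hT, rfl⟩
    refine ⟨c • S, c • T, hS.smul hc, hT.smul hc, ?_⟩
    rw [← coe_integYLinear, lram_smul, Matrix.map_smul _ _ (map_smul _ c), ← smul_add]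
    rfl

lemma IsSOSMatrix.mem_matQuadModule {H : Matrix ι ι (MvPolynomial (Fin n) ℝ)}
    (hH : IsSOSMatrix H) : H ∈ matQuadModule ι ν G :=
  ⟨H, 0, hH, .zero, by ext1; simp [lram, integY]⟩

lemma sq_smul_mem_matQuadModule (f : MvPolynomial (Fin n) ℝ)
    {H : Matrix ι ι (MvPolynomial (Fin n) ℝ)} (hH : H ∈ matQuadModule ι ν G) :
    f ^ 2 • H ∈ matQuadModule ι ν G := by
  obtain ⟨S, T, hS, hT, rfl⟩ := hH
  refine ⟨f ^ 2 • S, rename Sum.inl f ^ 2 • T, hS.sq_smul f, hT.sq_smul _, ?_⟩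
  ext1 i j
  simp [← coe_integYLinear, lram_smul, ← map_pow, integYLinear_rename_mul, mul_add]

lemma IsSOSMatrix.integY_trace_smul_mem_matQuadModule
    {S : Matrix κ κ (MvPolynomial (Fin n ⊕ Fin m) ℝ)} (hS : IsSOSMatrix S)
    {M : Matrix ι ι (MvPolynomial (Fin n) ℝ)} (hM : IsSOSMatrix M) :
    integY ν (trace (Sᵀ * G)) • M ∈ matQuadModule ι ν G := by
  refine ⟨0, M.map (rename Sum.inl) ⊗ₖ S, .zero, (hM.map_rename Sum.inl).kronecker hS, ?_⟩
  rw [lram_kronecker, zero_add, ← coe_integYLinear]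
  ext1 i j
  simp only [Matrix.map_apply, Matrix.smul_apply, smul_eq_mul, transpose_apply,
    mul_comm _ (rename _ _), integYLinear_rename_mul, hM.isSymm.apply i j]
  exact mul_comm _ _

/-- The matrices whose symmetrization lies in `Q^ι(G, ν)`. -/
noncomputable def symMatQuadModule (ι : Type*) [Fintype ι] (ν : Measure (Fin m → ℝ))
    (G : Matrix κ κ (MvPolynomial (Fin n ⊕ Fin m) ℝ)) :
    PointedCone ℝ (Matrix ι ι (MvPolynomial (Fin n) ℝ)) :=
  (matQuadModule ι ν G).comap (LinearMap.id + (transposeLinearEquiv ι ι ℝ _).toLinearMap)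

lemma mem_symMatQuadModule {H : Matrix ι ι (MvPolynomial (Fin n) ℝ)} :
    H ∈ symMatQuadModule ι ν G ↔ H + Hᵀ ∈ matQuadModule ι ν G := Iff.rfl

lemma mem_symMatQuadModule_iff_of_isSymm {H : Matrix ι ι (MvPolynomial (Fin n) ℝ)}
    (hH : H.IsSymm) : H ∈ symMatQuadModule ι ν G ↔ H ∈ matQuadModule ι ν G := by
  rw [mem_symMatQuadModule, hH.eq]
  refine ⟨fun h => ?_, fun h => (matQuadModule ι ν G).add_mem h h⟩
  convert (matQuadModule ι ν G).smul_mem (by norm_num : (0 : ℝ) ≤ 2⁻¹) h using 1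
  module

variable (ι ν G) in
lemma isMatrixQuadModule_symMatQuadModule : IsMatrixQuadModule (symMatQuadModule ι ν G) where
  transpose_mul_self_mem T := (mem_symMatQuadModule_iff_of_isSymm
    (isSymm_transpose_mul_self T)).2 (IsSOSMatrix.transpose_mul_self T).mem_matQuadModule
  sq_smul_mem f H hH := by
    rw [mem_symMatQuadModule, transpose_smul, ← smul_add]
    exact sq_smul_mem_matQuadModule f hH
  skew_mem hH := by
    rw [mem_symMatQuadModule, hH, add_neg_cancel]
    exact zero_mem _

lemma boundedSubalgebra_symMatQuadModule_eq_top {c : ℝ} (hc : 0 ≤ c)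
    {σ₀ : MvPolynomial (Fin n) ℝ} (hσ₀ : IsSOSPoly σ₀)
    {S : Matrix κ κ (MvPolynomial (Fin n ⊕ Fin m) ℝ)} (hS : IsSOSMatrix S)
    (h : MvPolynomial.C c - ∑ i, (X i : MvPolynomial (Fin n) ℝ) ^ 2 =
      σ₀ + integY ν (trace (Sᵀ * G))) :
    (isMatrixQuadModule_symMatQuadModule ι ν G).boundedSubalgebra = ⊤ := by
  obtain ⟨l, g, rfl⟩ := hσ₀
  refine IsMatrixQuadModule.boundedSubalgebra_eq_top_of_sum_X _ hc fun T => ?_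
  have hT : IsSOSMatrix (Tᵀ * T) := .transpose_mul_self T
  rw [mem_symMatQuadModule_iff_of_isSymm (hT.isSymm.smul _), h, add_smul, sum_smul]
  exact add_mem (sum_mem fun i _ => (hT.sq_smul (g i)).mem_matQuadModule)
    (hS.integY_trace_smul_mem_matQuadModule hT)

lemma integral_sq_mul_eval_dotProduct_mulVec_nonneg [DecidableEq ι] (hmom : momentsFinite ν)
    {a : Fin n → ℝ} (ha : ∀ f : MvPolynomial (Fin n) ℝ,
      f • (1 : Matrix ι ι _) ∈ symMatQuadModule ι ν G → 0 ≤ eval a f)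
    (v : κ → ℝ) (h : MvPolynomial (Fin m) ℝ) :
    0 ≤ ∫ y, eval y h ^ 2 * (v ⬝ᵥ evalMat (Sum.elim a y) G *ᵥ v) ∂ν := by
  set t : Matrix Unit κ (MvPolynomial (Fin n ⊕ Fin m) ℝ) :=
    replicateRow Unit fun i => rename Sum.inr h * MvPolynomial.C (v i)
  have hone : IsSOSMatrix (1 : Matrix ι ι (MvPolynomial (Fin n) ℝ)) := by
    simpa using IsSOSMatrix.transpose_mul_self (1 : Matrix ι ι (MvPolynomial (Fin n) ℝ))
  have hnonneg := ha _ <| (mem_symMatQuadModule_iff_of_isSymm (hone.isSymm.smul _)).2 <|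
    (IsSOSMatrix.transpose_mul_self t).integY_trace_smul_mem_matQuadModule hone
  rw [← coe_integYLinear, hmom.eval_integYLinear] at hnonneg
  convert hnonneg using 3 with y
  have ht (i j : κ) : eval (Sum.elim a y) ((tᵀ * t) i j) = eval y h ^ 2 * (v i * v j) := by
    simp only [transpose_replicateRow, Matrix.mul_apply, univ_unique, PUnit.default_eq_unit,
      replicateCol_apply, replicateRow_apply, sum_const, card_singleton, one_smul, map_mul,
      eval_rename, Sum.elim_comp_inr, eval_C, t]
    ring
  simp only [trace, diag_apply, Matrix.mul_apply (M := (tᵀ * t)ᵀ), transpose_apply (tᵀ * t),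
    map_sum, map_mul, ht, dotProduct, mulVec, evalMat, Matrix.map_apply, mul_sum]
  rw [sum_comm]
  exact sum_congr rfl fun i _ => sum_congr rfl fun j _ => by ring

lemma posSemidef_evalMat_of_mem_support [DecidableEq ι] (hcar : Carleman ν)
    (hmom : momentsFinite ν) (hG : G.IsSymm) {a : Fin n → ℝ}
    (ha : ∀ f : MvPolynomial (Fin n) ℝ,
      f • (1 : Matrix ι ι _) ∈ symMatQuadModule ι ν G → 0 ≤ eval a f)
    {y : Fin m → ℝ} (hy : y ∈ ν.support) : (evalMat (Sum.elim a y) G).PosSemidef := by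
  refine .of_dotProduct_mulVec_nonneg ?_ fun v => ?_
  · exact isHermitian_iff_isSymm.2 (hG.map _)
  have hquad (z : Fin m → ℝ) : eval z (substX a
      ((MvPolynomial.C ∘ v) ⬝ᵥ G *ᵥ (MvPolynomial.C ∘ v))) =
        v ⬝ᵥ evalMat (Sum.elim a z) G *ᵥ v := by
    rw [eval_substX]
    simp [dotProduct, mulVec, evalMat]
  rw [star_trivial, ← hquad]
  refine hcar.eval_nonneg hmom (fun h => ?_) hy
  simpa only [hquad] using integral_sq_mul_eval_dotProduct_mulVec_nonneg hmom ha v h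

theorem quantified_positivstellensatz_general (hmom : momentsFinite ν)
    (hcar : Carleman ν) (hG : G.IsSymm) {c : ℝ} (hc : 0 ≤ c)
    {σ₀ : MvPolynomial (Fin n) ℝ} (hσ₀ : IsSOSPoly σ₀)
    {S : Matrix κ κ (MvPolynomial (Fin n ⊕ Fin m) ℝ)} (hS : IsSOSMatrix S)
    (harch : MvPolynomial.C c - ∑ i, (X i : MvPolynomial (Fin n) ℝ) ^ 2 =
      σ₀ + integY ν (trace (Sᵀ * G)))
    {F : Matrix ι ι (MvPolynomial (Fin n) ℝ)} (hF : F.IsSymm)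
    (hpd : ∀ x : Fin n → ℝ, (∀ y ∈ ν.support, (evalMat (Sum.elim x y) G).PosSemidef) →
      (evalMat x F).PosDef) :
    F ∈ matQuadModule ι ν G := by
  classical
  rw [← mem_symMatQuadModule_iff_of_isSymm hF]
  refine (isMatrixQuadModule_symMatQuadModule ι ν G).mem_of_forall_posDef
    (boundedSubalgebra_symMatQuadModule_eq_top hc hσ₀ hS harch) fun χ hχ => ?_
  have heval : ⇑χ = eval (χ ∘ X) := by
    rw [← coe_aeval_eq_eval]
    exact congrArg _ (aeval_unique χ)
  rw [heval] at hχ ⊢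
  exact hpd _ fun y hy => posSemidef_evalMat_of_mem_support hcar hmom hG hχ hy

end QuantifiedModule

/-- the quantified matrix Positivstellensatz (Theorem A) under the
Archimedean and Carleman conditions. -/
theorem quantified_positivstellensatz {n m p q : ℕ}
    (Y : Set (Fin m → ℝ)) (hY : IsClosed Y)
    (ν : Measure (Fin m → ℝ)) (hsupp : hasSupport ν Y) (hmom : momentsFinite ν)
    (hcar : Carleman ν)
    (G : Matrix (Fin q) (Fin q) (MvPolynomial (Fin n ⊕ Fin m) ℝ)) (hGs : G.IsSymm)
    (harch : ∃ C > (0 : ℝ), ∃ σ₀ : MvPolynomial (Fin n) ℝ, IsSOSPoly σ₀ ∧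
      ∃ Sg : Matrix (Fin q) (Fin q) (MvPolynomial (Fin n ⊕ Fin m) ℝ), IsSOSMatrix Sg ∧
        MvPolynomial.C C - ∑ i, (X i : MvPolynomial (Fin n) ℝ) ^ 2 =
          σ₀ + integY ν (Matrix.trace (Sgᵀ * G)))
    (F : Matrix (Fin p) (Fin p) (MvPolynomial (Fin n) ℝ)) (hFs : F.IsSymm)
    (hpd : ∀ x : Fin n → ℝ,
      (∀ y ∈ Y, (evalMat (Sum.elim x y) G).PosSemidef) → (evalMat x F).PosDef) :
    ∃ (S0 : Matrix (Fin p) (Fin p) (MvPolynomial (Fin n) ℝ))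
      (Sg : Matrix (Fin p × Fin q) (Fin p × Fin q) (MvPolynomial (Fin n ⊕ Fin m) ℝ)),
      IsSOSMatrix S0 ∧ IsSOSMatrix Sg ∧
      F = S0 + (lram Sg G).map (integY ν) := by
  obtain ⟨c, hc, σ₀, hσ₀, S, hS, harch⟩ := harch
  exact quantified_positivstellensatz_general hmom hcar hGs hc.le hσ₀ hS harch hFs
    fun x hx => hpd x fun y hy => hx y (hsupp.subset_support hy)
end

section
/- Suppose Y is compact and F(x) ∈ S[x]^p is positive definite on X̂ = {x : G_j(x,y) ⪰ 0 ∀ j ∈ [s], y ∈ Y}. Then for every C > 0 there exist M > 0 and k̄ ∈ ℕ such that for all k ≥ k̄ and all x ∈ [−C,C]ⁿ, F(x) − Σ_{j=1}^s ∫_Y ⟨I_p ⊗ (I_{q_j} − G_j(x,y)/M)^{2k}, G_j(x,y)⟩_p dν(y) ≻ 0. -/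
open MeasureTheory MvPolynomial Matrix Finset

/-!
With `⟨A, B⟩_p = Tr_p (Aᵀ (I_p ⊗ B))` the subtracted matrix is `π_k(x) • 1`, where `π_k(x)` is the
sum over `j` of the integrals of `tr ((1 - G_j / M) ^ (2 k) G_j) = ∑ (1 - λ / M) ^ (2 k) λ`, the
sum running over the eigenvalues `λ` of `G_j(x, y)`. If all `λ ≤ M`, the summands with `λ ≥ 0` are
at most `M / (2 k + 1)` and those with `λ ≤ c < 0` are at most `-2 k c² / M`. Hence `π_k` is
eventually below any positive constant, uniformly in `x`, and it tends to `-∞` uniformly near each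
point that violates a constraint at a point of the support of `ν`. As `F(x₀) - c • 1` stays positive
definite near `x₀` for some `c`, which can be taken positive where `F(x₀)` is positive definite,
compactness finishes the proof.
-/

section ScalarPenalty

/-- The contribution `(1 - t / M) ^ (2 k) t` of an eigenvalue `t` to the penalty. -/
noncomputable def scalarPenalty (M : ℝ) (k : ℕ) (t : ℝ) : ℝ :=
  (1 - M⁻¹ * t) ^ (2 * k) * t

lemma one_sub_pow_mul_le {t : ℝ} (ht0 : 0 ≤ t) (ht1 : t ≤ 1) (N : ℕ) :
    (1 - t) ^ N * t ≤ 1 / (N + 1) := by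
  have hprod : (1 - t) ^ N * (1 + t) ^ N ≤ 1 := by
    rw [← mul_pow]
    exact pow_le_one₀ (by nlinarith) (by nlinarith)
  rw [le_div_iff₀ (by positivity)]
  calc (1 - t) ^ N * t * (N + 1) = (1 - t) ^ N * (N * t + t) := by ring
    _ ≤ (1 - t) ^ N * (1 + N * t) := by
        gcongr ?_ * ?_
        linarith
    _ ≤ (1 - t) ^ N * (1 + t) ^ N := by
        gcongr
        exact one_add_mul_le_pow (by linarith) N
    _ ≤ 1 := hprod

variable {M t : ℝ}

lemma scalarPenalty_le (hM : 0 < M) (ht : t ≤ M) (k : ℕ) :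
    scalarPenalty M k t ≤ M / (2 * k + 1) := by
  rcases le_total 0 t with h | h
  · have hscaled := one_sub_pow_mul_le (t := M⁻¹ * t) (by positivity)
      (by rwa [inv_mul_le_iff₀ hM, mul_one]) (2 * k)
    calc scalarPenalty M k t = M * ((1 - M⁻¹ * t) ^ (2 * k) * (M⁻¹ * t)) := by
          rw [scalarPenalty]
          field_simp
      _ ≤ M * (1 / ((2 * k : ℕ) + 1)) := by gcongr
      _ = M / (2 * k + 1) := by
          push_cast
          ring
  · calc scalarPenalty M k t ≤ 0 :=
          mul_nonpos_of_nonneg_of_nonpos ((even_two_mul k).pow_nonneg _) h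
      _ ≤ M / (2 * k + 1) := by positivity

lemma scalarPenalty_le_of_nonpos (hM : 0 < M) {c : ℝ} (hc : c ≤ 0) (ht : t ≤ c) (k : ℕ) :
    scalarPenalty M k t ≤ -(2 * k * (c ^ 2 / M)) := by
  have ht0 : t ≤ 0 := ht.trans hc
  have hbernoulli : 1 + (2 * k : ℕ) * -(M⁻¹ * t) ≤ (1 - M⁻¹ * t) ^ (2 * k) := by
    rw [sub_eq_add_neg]
    refine one_add_mul_le_pow ?_ _
    have := mul_nonpos_of_nonneg_of_nonpos (inv_pos.2 hM).le ht0
    linarith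
  have hsq : c ^ 2 ≤ t ^ 2 := by nlinarith
  calc scalarPenalty M k t ≤ (1 + (2 * k : ℕ) * -(M⁻¹ * t)) * t :=
        mul_le_mul_of_nonpos_right hbernoulli ht0
    _ = t - 2 * k * (t ^ 2 / M) := by
        push_cast
        ring
    _ ≤ 0 - 2 * k * (c ^ 2 / M) := by gcongr
    _ = -(2 * k * (c ^ 2 / M)) := zero_sub _

end ScalarPenalty

section LoewnerOrder

open Filter Topology
open scoped MatrixOrder

variable {ι : Type*}

lemma isClosed_setOf_posSemidef {R : Type*} [Ring R] [PartialOrder R] [StarRing R]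
    [TopologicalSpace R] [IsTopologicalRing R] [ContinuousStar R] [OrderClosedTopology R] :
    IsClosed {A : Matrix ι ι R | A.PosSemidef} := by
  have hinter : {A : Matrix ι ι R | A.PosSemidef} = {A | Aᴴ = A} ∩
      ⋂ v : ι →₀ R, {A | 0 ≤ v.sum fun i vi => v.sum fun j vj => star vi * A i j * vj} := by
    ext A
    simp [PosSemidef, IsHermitian]
  rw [hinter]
  refine (isClosed_eq continuous_id.matrix_conjTranspose continuous_id).inter <|
    isClosed_iInter fun v => isClosed_le continuous_const ?_
  unfold Finsupp.sum
  fun_prop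

lemma eventually_nhds_posDef [Finite ι] {A : Matrix ι ι ℝ} (hA : A.PosDef) :
    ∀ᶠ B in 𝓝 A, B.IsHermitian → B.PosDef := by
  have := Fintype.ofFinite ι
  have hsphere : ∀ᶠ B in 𝓝 A, ∀ v ∈ Metric.sphere (0 : ι → ℝ) 1, 0 < v ⬝ᵥ B *ᵥ v := by
    refine (isCompact_sphere _ _).eventually_forall_of_forall_eventually fun v hv => ?_
    have hquad : Continuous fun z : Matrix ι ι ℝ × (ι → ℝ) => z.2 ⬝ᵥ z.1 *ᵥ z.2 := by fun_prop
    refine hquad.continuousAt.eventually (lt_mem_nhds ?_)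
    simpa using hA.dotProduct_mulVec_pos (ne_zero_of_mem_unit_sphere ⟨v, hv⟩)
  filter_upwards [hsphere] with B hB hBH
  refine .of_dotProduct_mulVec_pos hBH fun v hv => ?_
  have hnorm : 0 < ‖v‖ := norm_pos_iff.2 hv
  have hscaled := hB (‖v‖⁻¹ • v) (by simp [norm_smul, hnorm.ne'])
  simp only [mulVec_smul, dotProduct_smul, smul_dotProduct, smul_eq_mul] at hscaled
  rw [star_trivial]
  exact pos_of_mul_pos_right (pos_of_mul_pos_right hscaled (by positivity)) (by positivity)

variable [DecidableEq ι]

lemma exists_isOpen_forall_not_smul_one_le {X Y : Type*} [TopologicalSpace X]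
    [TopologicalSpace Y] {H : X → Y → Matrix ι ι ℝ} (hH : Continuous fun z : X × Y => H z.1 z.2)
    {x₀ : X} {y₀ : Y} (hneg : ¬ (H x₀ y₀).PosSemidef) :
    ∃ c < (0 : ℝ), ∃ U ∈ 𝓝 x₀, ∃ V, IsOpen V ∧ y₀ ∈ V ∧
      ∀ x ∈ U, ∀ y ∈ V, ¬ c • (1 : Matrix ι ι ℝ) ≤ H x y := by
  have hcont : Continuous fun z : ℝ × X × Y => H z.2.1 z.2.2 - z.1 • (1 : Matrix ι ι ℝ) :=
    (hH.comp continuous_snd).sub (continuous_fst.smul continuous_const)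
  have hev : ∀ᶠ z in 𝓝 (0 : ℝ) ×ˢ 𝓝 (x₀, y₀), ¬ z.1 • (1 : Matrix ι ι ℝ) ≤ H z.2.1 z.2.2 := by
    rw [← nhds_prod_eq]
    exact hcont.continuousAt.eventually (isClosed_setOf_posSemidef.isOpen_compl.mem_nhds
      (by simpa using hneg))
  obtain ⟨c, hc, hc0⟩ :=
    ((hev.curry.filter_mono nhdsWithin_le_nhds).and (self_mem_nhdsWithin (s := Set.Iio 0))).exists
  obtain ⟨U, V, hU, hxU, hV, hyV, hUV⟩ := mem_nhds_prod_iff'.1 hc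
  exact ⟨c, hc0, U, hU.mem_nhds hxU, V, hV, hyV, fun x hx y hy => hUV (Set.mk_mem_prod hx hy)⟩

section Eigenvalues

variable [Fintype ι] {𝕜 : Type*} [RCLike 𝕜] {A : Matrix ι ι 𝕜}

lemma le_smul_one_iff_eigenvalues_le (hA : A.IsHermitian) {c : ℝ} :
    A ≤ c • 1 ↔ ∀ i, hA.eigenvalues i ≤ c := by
  rw [← Algebra.algebraMap_eq_smul_one, le_algebraMap_iff_spectrum_le hA.isSelfAdjoint,
    hA.spectrum_real_eq_range_eigenvalues, Set.forall_mem_range]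

lemma smul_one_le_iff_le_eigenvalues (hA : A.IsHermitian) {c : ℝ} :
    c • 1 ≤ A ↔ ∀ i, c ≤ hA.eigenvalues i := by
  rw [← Algebra.algebraMap_eq_smul_one, algebraMap_le_iff_le_spectrum hA.isSelfAdjoint,
    hA.spectrum_real_eq_range_eigenvalues, Set.forall_mem_range]

lemma trace_cfc_eq_sum_eigenvalues (hA : A.IsHermitian) (f : ℝ → ℝ) :
    (cfc f A).trace = ∑ i, (f (hA.eigenvalues i) : 𝕜) := by
  rw [hA.cfc_eq, Matrix.IsHermitian.cfc, Unitary.conjStarAlgAut_apply, trace_mul_cycle,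
    Unitary.coe_star_mul_self, one_mul, trace_diagonal]
  rfl

end Eigenvalues

variable {A : Matrix ι ι ℝ}

lemma isHermitian_of_le_smul_one {c : ℝ} (h : A ≤ c • 1) : A.IsHermitian := by
  simpa using (isHermitian_one.smul (IsSelfAdjoint.all c)).sub (Matrix.le_iff.1 h).isHermitian

lemma posDef_sub_smul_one_of_le {b c : ℝ} (hA : (A - b • (1 : Matrix ι ι ℝ)).PosDef)
    (hcb : c ≤ b) : (A - c • (1 : Matrix ι ι ℝ)).PosDef := by
  rw [← sub_add_sub_cancel A (b • 1), ← sub_smul]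
  exact hA.add_posSemidef (PosSemidef.one.smul (sub_nonneg.2 hcb))

variable [Finite ι]

lemma exists_pos_posDef_sub_smul_one (hA : A.PosDef) :
    ∃ c > (0 : ℝ), (A - c • (1 : Matrix ι ι ℝ)).PosDef := by
  have hcont : Continuous fun c : ℝ => A - c • (1 : Matrix ι ι ℝ) := by fun_prop
  have hev : ∀ᶠ c : ℝ in 𝓝 0, (A - c • (1 : Matrix ι ι ℝ)).PosDef :=
    (hcont.continuousAt.eventually (eventually_nhds_posDef (by simpa using hA))).mono
      fun c hc => hc (hA.isHermitian.sub (isHermitian_one.smul (IsSelfAdjoint.all c)))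
  obtain ⟨c, hc, hc0⟩ :=
    ((hev.filter_mono nhdsWithin_le_nhds).and (self_mem_nhdsWithin (s := Set.Ioi 0))).exists
  exact ⟨c, hc0, hc⟩

lemma exists_posDef_sub_smul_one (hA : A.IsHermitian) :
    ∃ c : ℝ, (A - c • (1 : Matrix ι ι ℝ)).PosDef := by
  have := Fintype.ofFinite ι
  obtain ⟨b, hb⟩ := Finite.bddBelow_range hA.eigenvalues
  have hbA : b • 1 ≤ A := (smul_one_le_iff_le_eigenvalues hA).2 fun i => hb ⟨i, rfl⟩
  refine ⟨b - 1, ?_⟩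
  rw [sub_smul, one_smul, ← sub_add]
  exact PosDef.posSemidef_add (Matrix.le_iff.1 hbA) .one

lemma eventually_atTop_forall_le_smul_one {X : Type*} [TopologicalSpace X] {K : Set X}
    (hK : IsCompact K) {f : X → Matrix ι ι ℝ} (hf : Continuous f)
    (hfH : ∀ x, (f x).IsHermitian) :
    ∀ᶠ M : ℝ in atTop, ∀ x ∈ K, f x ≤ M • 1 := by
  have hev : ∀ᶠ t : ℝ in 𝓝 0, ∀ x ∈ K, (1 - t • f x).PosDef := by
    refine hK.eventually_forall_of_forall_eventually fun x _ => ?_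
    have hcont : Continuous fun z : ℝ × X => 1 - z.1 • f z.2 := by fun_prop
    exact (hcont.continuousAt.eventually (eventually_nhds_posDef (by simpa using .one))).mono
      fun z hz => hz (isHermitian_one.sub ((hfH z.2).smul (IsSelfAdjoint.all z.1)))
  filter_upwards [tendsto_inv_atTop_zero.eventually hev, eventually_gt_atTop 0] with M hM hM0 x hx
  have := (hM x hx).posSemidef.smul hM0.le
  rwa [smul_sub, smul_inv_smul₀ hM0.ne'] at this

end LoewnerOrder

section TracePenalty

open scoped MatrixOrder

variable {ι : Type*} [Fintype ι] [DecidableEq ι] {A : Matrix ι ι ℝ} {M : ℝ}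

/-- The trace `tr ((1 - A / M) ^ (2 k) A)`, which is the value of `⟨I_p ⊗ (1 - A / M) ^ (2 k), A⟩_p`
as a multiple of `I_p` when `A` is symmetric. -/
noncomputable def tracePenalty (M : ℝ) (k : ℕ) (A : Matrix ι ι ℝ) : ℝ :=
  ((1 - M⁻¹ • A) ^ (2 * k) * A).trace

lemma tracePenalty_eq_sum_eigenvalues (hA : A.IsHermitian) (M : ℝ) (k : ℕ) :
    tracePenalty M k A = ∑ i, scalarPenalty M k (hA.eigenvalues i) := by
  have hA' : IsSelfAdjoint A := hA
  have hcfc : cfc (scalarPenalty M k) A = (1 - M⁻¹ • A) ^ (2 * k) * A := by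
    unfold scalarPenalty
    rw [cfc_mul _ _ A, cfc_pow _ _ A, cfc_sub _ _ A, cfc_const_one ℝ A, cfc_const_mul_id _ A,
      cfc_id' ℝ A]
  rw [tracePenalty, ← hcfc, trace_cfc_eq_sum_eigenvalues hA]
  rfl

lemma tracePenalty_le (hM : 0 < M) (hA : A ≤ M • 1) (k : ℕ) :
    tracePenalty M k A ≤ Fintype.card ι * (M / (2 * k + 1)) := by
  have hH := isHermitian_of_le_smul_one hA
  calc tracePenalty M k A = ∑ i, scalarPenalty M k (hH.eigenvalues i) :=
        tracePenalty_eq_sum_eigenvalues hH M k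
    _ ≤ ∑ _ : ι, M / (2 * k + 1) := Finset.sum_le_sum fun i _ =>
        scalarPenalty_le hM ((le_smul_one_iff_eigenvalues_le hH).1 hA i) k
    _ = Fintype.card ι * (M / (2 * k + 1)) := by simp

lemma tracePenalty_le_of_not_smul_one_le (hM : 0 < M) (hA : A ≤ M • 1) {c : ℝ} (hc : c ≤ 0)
    (hcA : ¬ c • 1 ≤ A) (k : ℕ) :
    tracePenalty M k A ≤ Fintype.card ι * (M / (2 * k + 1)) - 2 * k * (c ^ 2 / M) := by
  have hH := isHermitian_of_le_smul_one hA
  obtain ⟨i, hi⟩ : ∃ i, hH.eigenvalues i < c := by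
    simpa [smul_one_le_iff_le_eigenvalues hH] using hcA
  have hterm (j : ι) : scalarPenalty M k (hH.eigenvalues j) ≤
      M / (2 * k + 1) - if j = i then 2 * k * (c ^ 2 / M) else 0 := by
    split_ifs with hj
    · have hpos : 0 ≤ M / (2 * k + 1) := by positivity
      have hneg := scalarPenalty_le_of_nonpos hM hc (hj ▸ hi.le) k
      linarith
    · simpa using scalarPenalty_le hM ((le_smul_one_iff_eigenvalues_le hH).1 hA j) k
  calc tracePenalty M k A = ∑ j, scalarPenalty M k (hH.eigenvalues j) :=
        tracePenalty_eq_sum_eigenvalues hH M k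
    _ ≤ ∑ j, (M / (2 * k + 1) - if j = i then 2 * k * (c ^ 2 / M) else 0) :=
        Finset.sum_le_sum fun j _ => hterm j
    _ = Fintype.card ι * (M / (2 * k + 1)) - 2 * k * (c ^ 2 / M) := by simp

end TracePenalty

section IntegratedPenalty

open Filter Topology
open scoped MatrixOrder

variable {X Y : Type*} [MeasurableSpace Y] {ν : Measure Y} {M : ℝ}

section SingleConstraint

variable [IsFiniteMeasure ν] {ι : Type*} [Fintype ι] [DecidableEq ι]

lemma integral_tracePenalty_le (hM : 0 < M) {H : Y → Matrix ι ι ℝ} {k : ℕ}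
    (hint : Integrable (fun y => tracePenalty M k (H y)) ν) (hHM : ∀ᵐ y ∂ν, H y ≤ M • 1) :
    ∫ y, tracePenalty M k (H y) ∂ν ≤ ν.real Set.univ * (Fintype.card ι * (M / (2 * k + 1))) := by
  calc ∫ y, tracePenalty M k (H y) ∂ν ≤ ∫ _, Fintype.card ι * (M / (2 * k + 1)) ∂ν :=
        integral_mono_ae hint (integrable_const _) <| hHM.mono fun y hy => tracePenalty_le hM hy k
    _ = ν.real Set.univ * (Fintype.card ι * (M / (2 * k + 1))) := by
        rw [integral_const, smul_eq_mul]

lemma integral_tracePenalty_le_of_not_smul_one_le (hM : 0 < M) {H : Y → Matrix ι ι ℝ} {k : ℕ}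
    (hint : Integrable (fun y => tracePenalty M k (H y)) ν) (hHM : ∀ᵐ y ∂ν, H y ≤ M • 1)
    {c : ℝ} (hc : c ≤ 0) {V : Set Y} (hV : MeasurableSet V) (hcV : ∀ y ∈ V, ¬ c • 1 ≤ H y) :
    ∫ y, tracePenalty M k (H y) ∂ν ≤
      ν.real Set.univ * (Fintype.card ι * (M / (2 * k + 1))) -
        ν.real V * (2 * k * (c ^ 2 / M)) := by
  have hind : Integrable (V.indicator fun _ => 2 * k * (c ^ 2 / M)) ν :=
    (integrable_const _).indicator hV
  calc ∫ y, tracePenalty M k (H y) ∂ν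
      ≤ ∫ y, (Fintype.card ι * (M / (2 * k + 1)) -
          V.indicator (fun _ => 2 * k * (c ^ 2 / M)) y) ∂ν := by
        refine integral_mono_ae hint ((integrable_const _).sub hind) ?_
        filter_upwards [hHM] with y hy
        by_cases hyV : y ∈ V
        · simpa [hyV] using tracePenalty_le_of_not_smul_one_le hM hy hc (hcV y hyV) k
        · simpa [hyV] using tracePenalty_le hM hy k
    _ = ν.real Set.univ * (Fintype.card ι * (M / (2 * k + 1))) -
          ν.real V * (2 * k * (c ^ 2 / M)) := by
        rw [integral_sub (integrable_const _) hind, integral_indicator_const _ hV, integral_const,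
          smul_eq_mul, smul_eq_mul]

lemma tendsto_integral_tracePenalty_atBot [TopologicalSpace X] [TopologicalSpace Y]
    [OpensMeasurableSpace Y] (hM : 0 < M) {H : X → Y → Matrix ι ι ℝ}
    (hH : Continuous fun z : X × Y => H z.1 z.2)
    (hint : ∀ k x, Integrable (fun y => tracePenalty M k (H x y)) ν)
    (hHM : ∀ x, ∀ᵐ y ∂ν, H x y ≤ M • 1) {x₀ : X} {y₀ : Y} (hy₀ : y₀ ∈ ν.support)
    (hneg : ¬ (H x₀ y₀).PosSemidef) :
    Tendsto (fun z : ℕ × X => ∫ y, tracePenalty M z.1 (H z.2 y) ∂ν) (atTop ×ˢ 𝓝 x₀) atBot := by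
  obtain ⟨c, hc, U, hU, V, hV, hyV, hUV⟩ := exists_isOpen_forall_not_smul_one_le hH hneg
  have hνV : 0 < ν.real V :=
    ENNReal.toReal_pos ((Measure.mem_support_iff_forall y₀).1 hy₀ V (hV.mem_nhds hyV)).ne'
      (measure_ne_top ν V)
  have hslope : 0 < ν.real V * (2 * (c ^ 2 / M)) := by
    have := hc.ne
    positivity
  have hlim : Tendsto (fun z : ℕ × X => ν.real Set.univ * (Fintype.card ι * M) -
      z.1 * (ν.real V * (2 * (c ^ 2 / M)))) (atTop ×ˢ 𝓝 x₀) atBot :=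
    tendsto_atBot_add_const_left _ _ <| tendsto_neg_atTop_atBot.comp <|
      (tendsto_natCast_atTop_atTop.comp tendsto_fst).atTop_mul_const hslope
  refine tendsto_atBot_mono' _ ?_ hlim
  filter_upwards [prod_mem_prod univ_mem hU] with ⟨k, x⟩ hx
  calc ∫ y, tracePenalty M k (H x y) ∂ν
      ≤ ν.real Set.univ * (Fintype.card ι * (M / (2 * k + 1))) -
          ν.real V * (2 * k * (c ^ 2 / M)) :=
        integral_tracePenalty_le_of_not_smul_one_le hM (hint k x) (hHM x) hc.le
          hV.measurableSet (hUV x hx.2)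
    _ ≤ ν.real Set.univ * (Fintype.card ι * M) - ν.real V * (2 * k * (c ^ 2 / M)) := by
        gcongr
        exact div_le_self hM.le (by simp)
    _ = ν.real Set.univ * (Fintype.card ι * M) - k * (ν.real V * (2 * (c ^ 2 / M))) := by ring

end SingleConstraint

variable {κ : Type*} [Fintype κ] {q : κ → Type*} [∀ j, Fintype (q j)] [∀ j, DecidableEq (q j)]

/-- The scalar `∑ j, ∫ tr ((1 - G_j(x, y) / M) ^ (2 k) G_j(x, y)) dν(y)` that multiplies the
identity matrix in the penalty term. -/
noncomputable def integratedPenalty (ν : Measure Y) (G : ∀ j, X → Y → Matrix (q j) (q j) ℝ)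
    (M : ℝ) (k : ℕ) (x : X) : ℝ :=
  ∑ j, ∫ y, tracePenalty M k (G j x y) ∂ν

variable [IsFiniteMeasure ν] {G : ∀ j, X → Y → Matrix (q j) (q j) ℝ}

lemma eventually_forall_integratedPenalty_le (hM : 0 < M)
    (hint : ∀ j k x, Integrable (fun y => tracePenalty M k (G j x y)) ν)
    (hGM : ∀ j x, ∀ᵐ y ∂ν, G j x y ≤ M • 1) {c : ℝ} (hc : 0 < c) :
    ∀ᶠ k in atTop, ∀ x, integratedPenalty ν G M k x ≤ c := by
  have hden : Tendsto (fun k : ℕ => 2 * (k : ℝ) + 1) atTop atTop :=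
    tendsto_atTop_add_const_right _ _ (tendsto_natCast_atTop_atTop.const_mul_atTop two_pos)
  have hlim : Tendsto (fun k : ℕ => ∑ j, ν.real Set.univ *
      (Fintype.card (q j) * (M / (2 * (k : ℝ) + 1)))) atTop (𝓝 0) := by
    simpa using tendsto_finsetSum Finset.univ fun j _ =>
      ((hden.const_div_atTop M).const_mul (Fintype.card (q j) : ℝ)).const_mul (ν.real Set.univ)
  filter_upwards [hlim.eventually (gt_mem_nhds hc)] with k hk x
  exact (Finset.sum_le_sum fun j _ =>
    integral_tracePenalty_le hM (hint j k x) (hGM j x)).trans hk.le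

variable [TopologicalSpace X] [TopologicalSpace Y] [OpensMeasurableSpace Y]

lemma tendsto_integratedPenalty_atBot (hM : 0 < M)
    (hG : ∀ j, Continuous fun z : X × Y => G j z.1 z.2)
    (hint : ∀ j k x, Integrable (fun y => tracePenalty M k (G j x y)) ν)
    (hGM : ∀ j x, ∀ᵐ y ∂ν, G j x y ≤ M • 1) {j₀ : κ} {x₀ : X} {y₀ : Y} (hy₀ : y₀ ∈ ν.support)
    (hneg : ¬ (G j₀ x₀ y₀).PosSemidef) :
    Tendsto (fun z : ℕ × X => integratedPenalty ν G M z.1 z.2) (atTop ×ˢ 𝓝 x₀) atBot := by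
  classical
  simp only [integratedPenalty, ← Finset.add_sum_erase _ _ (Finset.mem_univ j₀)]
  refine tendsto_atBot_add_right_of_ge _
    (∑ j ∈ Finset.univ.erase j₀, ν.real Set.univ * (Fintype.card (q j) * M))
    (tendsto_integral_tracePenalty_atBot hM (hG j₀) (hint j₀) (hGM j₀) hy₀ hneg)
    fun z => Finset.sum_le_sum fun j _ => ?_
  calc ∫ y, tracePenalty M z.1 (G j z.2 y) ∂ν
      ≤ ν.real Set.univ * (Fintype.card (q j) * (M / (2 * z.1 + 1))) :=
        integral_tracePenalty_le hM (hint j z.1 z.2) (hGM j z.2)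
    _ ≤ ν.real Set.univ * (Fintype.card (q j) * M) := by
        gcongr
        exact div_le_self hM.le (by simp)

lemma eventually_forall_posDef_sub_integratedPenalty [CompactSpace X] {ι : Type*} [Finite ι]
    [DecidableEq ι] {F : X → Matrix ι ι ℝ} (hF : Continuous F) (hFH : ∀ x, (F x).IsHermitian)
    (hM : 0 < M) (hG : ∀ j, Continuous fun z : X × Y => G j z.1 z.2)
    (hint : ∀ j k x, Integrable (fun y => tracePenalty M k (G j x y)) ν)
    (hGM : ∀ j x, ∀ᵐ y ∂ν, G j x y ≤ M • 1)
    (hpd : ∀ x, (∀ j, ∀ y ∈ ν.support, (G j x y).PosSemidef) → (F x).PosDef) :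
    ∀ᶠ k in atTop, ∀ x, (F x - integratedPenalty ν G M k x • (1 : Matrix ι ι ℝ)).PosDef := by
  have hbound (x₀ : X) : ∃ c : ℝ, (F x₀ - c • (1 : Matrix ι ι ℝ)).PosDef ∧
      ∀ᶠ z : ℕ × X in atTop ×ˢ 𝓝 x₀, integratedPenalty ν G M z.1 z.2 ≤ c := by
    by_cases hfeas : ∀ j, ∀ y ∈ ν.support, (G j x₀ y).PosSemidef
    · obtain ⟨c, hc, hFc⟩ := exists_pos_posDef_sub_smul_one (hpd x₀ hfeas)
      exact ⟨c, hFc, (eventually_forall_integratedPenalty_le hM hint hGM hc).prod_inl _ |>.mono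
        fun z hz => hz z.2⟩
    · push Not at hfeas
      obtain ⟨j, y, hy, hneg⟩ := hfeas
      obtain ⟨c, hFc⟩ := exists_posDef_sub_smul_one (hFH x₀)
      exact ⟨c, hFc, (tendsto_integratedPenalty_atBot hM hG hint hGM hy hneg).eventually_le_atBot c⟩
  have hlocal (x₀ : X) : ∀ᶠ z : ℕ × X in atTop ×ˢ 𝓝 x₀,
      (F z.2 - integratedPenalty ν G M z.1 z.2 • (1 : Matrix ι ι ℝ)).PosDef := by
    obtain ⟨c, hFc, hle⟩ := hbound x₀
    have hcont : Continuous fun x => F x - c • (1 : Matrix ι ι ℝ) := by fun_prop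
    filter_upwards [hle, (hcont.continuousAt.eventually (eventually_nhds_posDef hFc)).prod_inr _]
      with z hz hFz
    exact posDef_sub_smul_one_of_le
      (hFz ((hFH z.2).sub (isHermitian_one.smul (IsSelfAdjoint.all c)))) hz
  have huniform := isCompact_univ.mem_prod_nhdsSet_of_forall fun x₀ _ => hlocal x₀
  rw [nhdsSet_univ] at huniform
  exact (Eventually.curry huniform).mono fun k hk => eventually_top.1 hk

end IntegratedPenalty

section EvalMat

variable {σ ι : Type*}

lemma continuous_evalMat (A : Matrix ι ι (MvPolynomial σ ℝ)) :
    Continuous fun x : σ → ℝ => evalMat x A :=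
  continuous_matrix fun i j => MvPolynomial.continuous_eval (A i j)

lemma continuous_evalMat_sumElim {τ Z : Type*} [TopologicalSpace Z]
    (A : Matrix ι ι (MvPolynomial (σ ⊕ τ) ℝ)) {f : Z → σ → ℝ} {g : Z → τ → ℝ}
    (hf : Continuous f) (hg : Continuous g) :
    Continuous fun z => evalMat (Sum.elim (f z) (g z)) A :=
  (continuous_evalMat A).comp <| continuous_pi <| Sum.rec
    (fun i => (continuous_apply i).comp hf) (fun j => (continuous_apply j).comp hg)

lemma isHermitian_evalMat {A : Matrix ι ι (MvPolynomial σ ℝ)} (hA : A.IsSymm) (x : σ → ℝ) :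
    (evalMat x A).IsHermitian := by
  rw [Matrix.IsHermitian, conjTranspose_eq_transpose_of_trivial]
  exact hA.map (eval x)

lemma eval_trace_one_sub_smul_pow_mul [Fintype ι] [DecidableEq ι]
    (A : Matrix ι ι (MvPolynomial σ ℝ)) (M : ℝ) (k : ℕ) (x : σ → ℝ) :
    eval x ((1 - M⁻¹ • A) ^ (2 * k) * A).trace = tracePenalty M k (evalMat x A) := by
  have hsmul : (eval x).mapMatrix (M⁻¹ • A) = M⁻¹ • (eval x).mapMatrix A := by
    ext i j
    simp [smul_eval]
  rw [AddMonoidHom.map_trace, tracePenalty]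
  change ((eval x).mapMatrix _).trace = ((1 - M⁻¹ • (eval x).mapMatrix A) ^ (2 * k) *
    (eval x).mapMatrix A).trace
  rw [map_mul, map_pow, map_sub, map_one, hsmul]

lemma lram_one_kronecker {R : Type*} [CommSemiring R] {ιp ιq : Type*} [Fintype ιq]
    [DecidableEq ιp] (N : Matrix ιq ιq R) {B : Matrix ιq ιq R} (hB : B.IsSymm) :
    lram (kroneckerMap (· * ·) (1 : Matrix ιp ιp R) N) B = (N * B).trace • 1 := by
  ext i j
  rcases eq_or_ne i j with rfl | hij
  · simp only [lram, of_apply, kroneckerMap_apply, one_apply_eq, one_mul, Matrix.smul_apply,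
      smul_eq_mul, mul_one, Matrix.trace, diag_apply, Matrix.mul_apply]
    rw [Finset.sum_comm]
    simp only [hB.apply]
  · simp [lram, hij, hij.symm]

end EvalMat

section Integration

variable {n m : ℕ} {ν : Measure (Fin m → ℝ)}

lemma hasSupport.eq_support {Y : Set (Fin m → ℝ)} (hν : hasSupport ν Y) (hY : IsClosed Y) :
    Y = ν.support := by
  refine Set.Subset.antisymm (fun y hy => ?_) (Measure.support_subset_of_isClosed hY hν.1)
  rw [Measure.support_eq_forall_isOpen]
  exact fun U hyU hU => hν.2 U hU ⟨y, hyU, hy⟩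

lemma eval_sumElim {R σ τ : Type*} [CommSemiring R] (x : σ → R) (y : τ → R)
    (h : MvPolynomial (σ ⊕ τ) R) :
    eval (Sum.elim x y) h = eval y (bind₁ (Sum.elim (fun i => C (x i)) X) h) := by
  have hcomp : Sum.elim x y = fun i => eval y (Sum.elim (fun i => C (x i)) X i) := by
    ext (i | j) <;> simp
  rw [hcomp]
  exact (eval₂Hom_bind₁ (RingHom.id R) y _ h).symm

namespace momentsFinite

lemma integrable_eval (hν : momentsFinite ν) (h : MvPolynomial (Fin m) ℝ) :
    Integrable (fun y => eval y h) ν :=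
  (integrable_norm_iff (MvPolynomial.continuous_eval h).aestronglyMeasurable).1 (hν h)

lemma isFiniteMeasure_s13 (hν : momentsFinite ν) : IsFiniteMeasure ν := by
  simpa [integrable_const_iff] using hν.integrable_eval 1

lemma integrable_eval_sumElim (hν : momentsFinite ν) {σ : Type*} (x : σ → ℝ)
    (h : MvPolynomial (σ ⊕ Fin m) ℝ) : Integrable (fun y => eval (Sum.elim x y) h) ν := by
  simpa only [eval_sumElim] using hν.integrable_eval _

lemma integrable_tracePenalty (hν : momentsFinite ν) {σ ι : Type*} [Fintype ι] [DecidableEq ι]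
    (A : Matrix ι ι (MvPolynomial (σ ⊕ Fin m) ℝ)) (M : ℝ) (k : ℕ) (x : σ → ℝ) :
    Integrable (fun y => tracePenalty M k (evalMat (Sum.elim x y) A)) ν := by
  simpa only [eval_trace_one_sub_smul_pow_mul] using
    hν.integrable_eval_sumElim x ((1 - M⁻¹ • A) ^ (2 * k) * A).trace

lemma eval_integY (hν : momentsFinite ν) (x : Fin n → ℝ)
    (h : MvPolynomial (Fin n ⊕ Fin m) ℝ) :
    eval x (integY ν h) = ∫ y, eval (Sum.elim x y) h ∂ν := by
  have hmonomial (d : (Fin n ⊕ Fin m) →₀ ℕ) (y : Fin m → ℝ) :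
      eval (Sum.elim x y) (monomial d (h.coeff d)) =
        (h.coeff d * ∏ i, x i ^ d (Sum.inl i)) * ∏ j, y j ^ d (Sum.inr j) := by
    rw [eval_monomial, Finsupp.prod_fintype _ _ (by simp), Fintype.prod_sum_type, mul_assoc]
    simp only [Sum.elim_inl, Sum.elim_inr]
  conv_rhs => rw [h.as_sum]
  simp only [map_sum]
  rw [integral_finsetSum _ fun d _ => hν.integrable_eval_sumElim x _, integY, map_sum]
  refine Finset.sum_congr rfl fun d _ => ?_
  simp only [hmonomial]
  rw [integral_const_mul, eval_monomial, Finsupp.prod_fintype _ _ (by simp)]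
  simp only [xPart, Finsupp.comapDomain_apply]
  ring

end momentsFinite

end Integration

section PenalizedMatrix

open Filter
open scoped MatrixOrder

lemma exists_pos_forall_evalMat_le_smul_one {σ τ κ : Type*} [Finite κ] {q : κ → Type*}
    [∀ j, Finite (q j)] [∀ j, DecidableEq (q j)] {K : Set (σ → ℝ)} (hK : IsCompact K)
    {Y : Set (τ → ℝ)} (hY : IsCompact Y) {G : ∀ j, Matrix (q j) (q j) (MvPolynomial (σ ⊕ τ) ℝ)}
    (hGs : ∀ j, (G j).IsSymm) :
    ∃ M > (0 : ℝ), ∀ j, ∀ x ∈ K, ∀ y ∈ Y, evalMat (Sum.elim x y) (G j) ≤ M • 1 := by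
  have hev (j : κ) := eventually_atTop_forall_le_smul_one (hK.prod hY)
    (continuous_evalMat_sumElim (G j) continuous_fst continuous_snd)
    fun _ => isHermitian_evalMat (hGs j) _
  obtain ⟨M, hM, hM0⟩ := ((eventually_all.2 hev).and (eventually_gt_atTop 0)).exists
  exact ⟨M, hM0, fun j x hx y hy => hM j (x, y) ⟨hx, hy⟩⟩

variable {n m : ℕ} {ν : Measure (Fin m → ℝ)} {ι κ : Type*} [Fintype κ] [DecidableEq ι]
  {q : κ → Type*} [∀ j, Fintype (q j)] [∀ j, DecidableEq (q j)]
  {G : ∀ j, Matrix (q j) (q j) (MvPolynomial (Fin n ⊕ Fin m) ℝ)}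
  {F : Matrix ι ι (MvPolynomial (Fin n) ℝ)} {M : ℝ}

/-- The polynomial matrix `F - ∑ j, ∫_Y ⟨I_p ⊗ (I - G_j / M) ^ (2 k), G_j⟩_p dν` in `x`, obtained
from `F` by penalizing the constraints `G_j(x, y) ⪰ 0`. -/
noncomputable def penalizedMatrix (ν : Measure (Fin m → ℝ))
    (G : ∀ j, Matrix (q j) (q j) (MvPolynomial (Fin n ⊕ Fin m) ℝ))
    (F : Matrix ι ι (MvPolynomial (Fin n) ℝ)) (M : ℝ) (k : ℕ) :
    Matrix ι ι (MvPolynomial (Fin n) ℝ) :=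
  F - ∑ j, (lram (kroneckerMap (· * ·) 1 ((1 - M⁻¹ • G j) ^ (2 * k))) (G j)).map (integY ν)

lemma evalMat_penalizedMatrix (hν : momentsFinite ν) (hGs : ∀ j, (G j).IsSymm) (k : ℕ)
    (x : Fin n → ℝ) :
    evalMat x (penalizedMatrix ν G F M k) = evalMat x F -
      integratedPenalty ν (fun j x y => evalMat (Sum.elim x y) (G j)) M k x • 1 := by
  ext a b
  simp only [penalizedMatrix, lram_one_kronecker _ (hGs _), integratedPenalty,
    ← eval_trace_one_sub_smul_pow_mul]
  rcases eq_or_ne a b with rfl | hab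
  · simp [evalMat, Matrix.sum_apply, hν.eval_integY]
  · simp [evalMat, Matrix.sum_apply, hab, integY]

theorem penalized_posdef_general [Finite ι] (hν : momentsFinite ν) (hGs : ∀ j, (G j).IsSymm)
    (hFs : F.IsSymm) {K : Set (Fin n → ℝ)} (hK : IsCompact K) (hM : 0 < M)
    (hGM : ∀ j, ∀ x ∈ K, ∀ y ∈ ν.support, evalMat (Sum.elim x y) (G j) ≤ M • 1)
    (hpd : ∀ x ∈ K, (∀ j, ∀ y ∈ ν.support, (evalMat (Sum.elim x y) (G j)).PosSemidef) →
      (evalMat x F).PosDef) :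
    ∀ᶠ k in atTop, ∀ x ∈ K, (evalMat x (penalizedMatrix ν G F M k)).PosDef := by
  have := hν.isFiniteMeasure_s13
  have := isCompact_iff_compactSpace.1 hK
  have hmem : ∀ᵐ y ∂ν, y ∈ ν.support := Measure.support_mem_ae
  have hev := eventually_forall_posDef_sub_integratedPenalty
    (F := fun x : K => evalMat (x : Fin n → ℝ) F)
    (G := fun j (x : K) y => evalMat (Sum.elim (x : Fin n → ℝ) y) (G j))
    ((continuous_evalMat F).comp continuous_subtype_val) (fun x => isHermitian_evalMat hFs x.1) hM
    (fun j => continuous_evalMat_sumElim (G j) (continuous_subtype_val.comp continuous_fst)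
      continuous_snd)
    (fun j k x => hν.integrable_tracePenalty (G j) M k x.1)
    (fun j x => hmem.mono fun y hy => hGM j x x.2 y hy)
    fun x => hpd x x.2
  filter_upwards [hev] with k hk x hx
  rw [evalMat_penalizedMatrix hν hGs]
  exact hk ⟨x, hx⟩

end PenalizedMatrix

/-- uniform positive definiteness of the penalized matrix on `[−C,C]ⁿ`
for large powers `k` (Proposition on which the constructive proof rests). -/
theorem penalized_posdef {n m p s : ℕ} (qd : Fin s → ℕ)
    (Y : Set (Fin m → ℝ)) (hYc : IsCompact Y)
    (ν : Measure (Fin m → ℝ)) (hsupp : hasSupport ν Y) (hmom : momentsFinite ν)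
    (G : ∀ j, Matrix (Fin (qd j)) (Fin (qd j)) (MvPolynomial (Fin n ⊕ Fin m) ℝ))
    (hGs : ∀ j, (G j).IsSymm)
    (F : Matrix (Fin p) (Fin p) (MvPolynomial (Fin n) ℝ)) (hFs : F.IsSymm)
    (hpd : ∀ x : Fin n → ℝ,
      (∀ j, ∀ y ∈ Y, (evalMat (Sum.elim x y) (G j)).PosSemidef) → (evalMat x F).PosDef) :
    ∀ C > (0 : ℝ), ∃ M > (0 : ℝ), ∃ kbar : ℕ, ∀ k ≥ kbar,
      ∀ x : Fin n → ℝ, (∀ i, |x i| ≤ C) →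
      (evalMat x (F - ∑ j,
        (lram (Matrix.kroneckerMap (· * ·)
            (1 : Matrix (Fin p) (Fin p) (MvPolynomial (Fin n ⊕ Fin m) ℝ))
            (((1 : Matrix (Fin (qd j)) (Fin (qd j)) (MvPolynomial (Fin n ⊕ Fin m) ℝ)) -
              (M⁻¹ : ℝ) • G j) ^ (2 * k)))
          (G j)).map (integY ν))).PosDef := by
  intro C _
  obtain rfl := hsupp.eq_support hYc.isClosed
  obtain ⟨M, hM, hGM⟩ := exists_pos_forall_evalMat_le_smul_one
    (isCompact_Icc (a := fun _ : Fin n => -C) (b := fun _ => C)) hYc hGs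
  obtain ⟨kbar, hkbar⟩ := Filter.eventually_atTop.1 <|
    penalized_posdef_general hmom hGs hFs isCompact_Icc hM hGM fun x _ => hpd x
  exact ⟨M, hM, kbar, fun k hk x hx =>
    hkbar k hk x ⟨fun i => (abs_le.1 (hx i)).1, fun i => (abs_le.1 (hx i)).2⟩⟩
end
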